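/- arXiv:2001.04670 — 7 statements merged into one kernel-verified Lean document; each statement's English description precedes it below -/
import Mathlib

section
/- Let T_p be an invertible p×p binary matrix, let n ≥ 0, N = 2^n·p, and T_N = T_2^{⊗n} ⊗ T_p. Then for every k ∈ {1,…,N}, the minimum-distance spectrum value S_{T_N}(k) equals the k-th largest element (counted with multiplicity) of the multiset { 2^{popcount(q)} · S_{T_p}(j) : 0 ≤ q ≤ 2^n − 1, 1 ≤ j ≤ p }. Equivalently, the non-increasing sequence (S_{T_N}(1),…,S_{T_N}(N)) is the descending sort of the Kronecker product of the vector of row weights of T_2^{⊗n} with the vector (S_{T_p}(1),…,S_{T_p}(p)). -/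
/-!
Write `R_q` for the rows of the right factor that a row set `R` of `T₂^{⊗n} ⊗ T_p` selects in
block `q`. The heart of the matter is the exact formula
`d(T_N^(R)) = min { 2 ^ popcount q * d(T_p^(R_q)) : R_q ≠ ∅ }`. The upper bound is witnessed by
the pure tensors `row q ⊗ c` (`hammingNorm_kronPow_row`, `hammingNorm_tensor`). The lower bound
is the `(u + v | v)` argument (`plotkin_bound`), iterated over the `n` tensor factors in
`kronPow_bound`.

Fix a threshold `t ≥ 1` and let `K(T, t)` be the largest number of rows generating a code of
minimum distance at least `t` (`maxGood`). Dropping rows does not decrease the minimum distance,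
so `t ≤ S_T(k)` if and only if `k ≤ K(T, t)`. Since the blocks `R_q` can be chosen independently,
the formula above gives `K(T_N, t) = ∑ q, K(T_p, t / 2 ^ popcount q)` (`maxGood_kron`), and this
sum counts the pairs `(q, j)` with `t ≤ 2 ^ popcount q * S_{T_p}(j)` (`card_le_mul_spec`). The
`k`-th largest element of a multiset is at least `t` exactly when at least `k` elements are
(`le_kthLargest_iff`), so both sides have the same thresholds. To keep to natural numbers, the
quotient `t / 2 ^ popcount q` is carried as a pair `(w, t)` with conditions `t ≤ w * weight`.
-/

open Matrix

/-- If `i < a * b` then `b` is positive. -/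
theorem kron_aux {a b i : ℕ} (h : i < a * b) : 0 < b := by
  rcases Nat.eq_zero_or_pos b with hb | hb
  · subst hb; simp at h
  · exact hb

/-- Kronecker product of binary matrices with flattened (0-indexed) indices:
row `q * b + j` of `kron A B` is formed from row `q` of `A` and row `j` of `B`. -/
def kron {a b c d : ℕ} (A : Matrix (Fin a) (Fin c) (ZMod 2))
    (B : Matrix (Fin b) (Fin d) (ZMod 2)) :
    Matrix (Fin (a * b)) (Fin (c * d)) (ZMod 2) :=
  Matrix.of fun i j =>
    A ⟨(i : ℕ) / b, Nat.div_lt_of_lt_mul (lt_of_lt_of_le i.isLt (Nat.mul_comm a b).le)⟩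
      ⟨(j : ℕ) / d, Nat.div_lt_of_lt_mul (lt_of_lt_of_le j.isLt (Nat.mul_comm c d).le)⟩ *
    B ⟨(i : ℕ) % b, Nat.mod_lt _ (kron_aux i.isLt)⟩
      ⟨(j : ℕ) % d, Nat.mod_lt _ (kron_aux j.isLt)⟩

/-- The Arikan kernel `T₂ = [[1,0],[1,1]]`. -/
def T2 : Matrix (Fin 2) (Fin 2) (ZMod 2) := !![1, 0; 1, 1]

/-- `n`-fold Kronecker power. -/
def kronPow {p : ℕ} (T : Matrix (Fin p) (Fin p) (ZMod 2)) :
    (n : ℕ) → Matrix (Fin (p ^ n)) (Fin (p ^ n)) (ZMod 2)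
  | 0 => 1
  | n + 1 => kron (kronPow T n) T

/-- Minimum distance of the code generated by the rows of `T` indexed by `R`:
the least Hamming weight of a nonzero vector in the `𝔽₂`-span of those rows. -/
noncomputable def minDist {p m : ℕ} (T : Matrix (Fin p) (Fin m) (ZMod 2))
    (R : Finset (Fin p)) : ℕ :=
  sInf {w : ℕ | ∃ x ∈ Submodule.span (ZMod 2) ((fun i => T i) '' (R : Set (Fin p))),
    x ≠ 0 ∧ hammingNorm x = w}

/-- Minimum-distance spectrum: `spec T k` is the largest minimum distance achievable
by a sub-code generated by `k` rows of `T`. -/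
noncomputable def spec {p m : ℕ} (T : Matrix (Fin p) (Fin m) (ZMod 2)) (k : ℕ) : ℕ :=
  ((Finset.univ : Finset (Fin p)).powersetCard k).sup (minDist T)

/-- Number of ones in the binary representation of `q`. -/
def popCount (q : ℕ) : ℕ := (Nat.digits 2 q).count 1

/-- The `k`-th largest element (1-indexed, with multiplicity) of a multiset of naturals. -/
def kthLargest (M : Multiset ℕ) (k : ℕ) : ℕ :=
  ((M.sort (· ≤ ·)).reverse).getD (k - 1) 0

/-! ### Order statistics by counting -/

theorem le_getD_iff_lt_countP (L : List ℕ) (hL : L.Pairwise (· ≥ ·)) (t : ℕ) (ht : 1 ≤ t)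
    (k : ℕ) : t ≤ L.getD k 0 ↔ k < L.countP (t ≤ ·) := by
  induction L generalizing k with
  | nil => simp; omega
  | cons a L ih =>
    rw [List.pairwise_cons] at hL
    have h0 : ¬ t ≤ a → L.countP (t ≤ ·) = 0 := by
      intro h
      rw [List.countP_eq_zero]
      intro b hb
      have := hL.1 b hb
      simp; omega
    rw [List.countP_cons]
    cases k with
    | zero =>
      by_cases h : t ≤ a
      · simp [h]
      · simp [h, h0 h]
    | succ k =>
      rw [List.getD_cons_succ, ih hL.2]
      by_cases h : t ≤ a
      · simp [h]
      · simp [h, h0 h]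

theorem le_kthLargest_iff (M : Multiset ℕ) {t k : ℕ} (ht : 1 ≤ t) (hk : 1 ≤ k) :
    t ≤ kthLargest M k ↔ k ≤ M.countP (t ≤ ·) := by
  have hs : (M.sort (· ≤ ·)).reverse.Pairwise (· ≥ ·) := by
    rw [List.pairwise_reverse]
    exact M.pairwise_sort (· ≤ ·)
  have hM : M.countP (t ≤ ·) = (M.sort (· ≤ ·)).countP (t ≤ ·) := by
    conv_lhs => rw [← M.sort_eq (· ≤ ·)]
    rw [Multiset.coe_countP]
  rw [kthLargest, le_getD_iff_lt_countP _ hs t ht, List.countP_reverse, hM]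
  omega

/-! ### Minimum distance and spectrum through generating row sets -/

/-- The rows of `T` indexed by `R` generate a code in which every nonzero coefficient vector
produces a word of weight at least `t / w`. Coefficients rather than codewords are used; for `T`
with independent rows this says `t ≤ w * minDist T R`, and the empty set always qualifies. -/
def IsGoodSet {p m : ℕ} (T : Matrix (Fin p) (Fin m) (ZMod 2)) (w t : ℕ)
    (R : Finset (Fin p)) : Prop :=
  ∀ c : Fin p → ZMod 2, (∀ i ∉ R, c i = 0) → c ≠ 0 → t ≤ w * hammingNorm (c ᵥ* T)

theorem mem_span_rows_iff {p m : ℕ} (T : Matrix (Fin p) (Fin m) (ZMod 2)) (R : Finset (Fin p))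
    (x : Fin m → ZMod 2) :
    x ∈ Submodule.span (ZMod 2) ((fun i => T i) '' (R : Set (Fin p))) ↔
      ∃ c : Fin p → ZMod 2, (∀ i ∉ R, c i = 0) ∧ c ᵥ* T = x := by
  classical
  rw [Submodule.mem_span_image_finset_iff_exists_fun]
  constructor
  · rintro ⟨c, rfl⟩
    refine ⟨fun i => if h : i ∈ R then c ⟨i, h⟩ else 0, fun i hi => by simp [hi], ?_⟩
    rw [Matrix.vecMul_eq_sum, ← Finset.sum_subset (Finset.subset_univ R)
      (fun i _ hi => by simp [hi]), ← Finset.sum_coe_sort R]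
    exact Finset.sum_congr rfl fun i _ => by simp
  · rintro ⟨c, hc, rfl⟩
    refine ⟨fun i => c i, ?_⟩
    rw [Matrix.vecMul_eq_sum, ← Finset.sum_subset (Finset.subset_univ R)
      (fun i _ hi => by simp [hc i hi]), ← Finset.sum_coe_sort R]

theorem le_mul_minDist_iff {p m : ℕ} {T : Matrix (Fin p) (Fin m) (ZMod 2)}
    (hT : ∀ c : Fin p → ZMod 2, c ≠ 0 → c ᵥ* T ≠ 0) {R : Finset (Fin p)} (hR : R.Nonempty)
    (w t : ℕ) : t ≤ w * minDist T R ↔ IsGoodSet T w t R := by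
  classical
  constructor
  · intro h c hc hc0
    refine h.trans (Nat.mul_le_mul_left _ (Nat.sInf_le ?_))
    exact ⟨_, (mem_span_rows_iff T R _).2 ⟨c, hc, rfl⟩, hT c hc0, rfl⟩
  · intro h
    obtain ⟨i, hi⟩ := hR
    have hne : {w : ℕ | ∃ x ∈ Submodule.span (ZMod 2) ((fun i => T i) '' (R : Set (Fin p))),
        x ≠ 0 ∧ hammingNorm x = w}.Nonempty := by
      refine ⟨_, _, (mem_span_rows_iff T R _).2 ⟨Pi.single i 1, ?_, rfl⟩,
        hT _ (by simp), rfl⟩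
      intro j hj
      exact Pi.single_eq_of_ne (by rintro rfl; exact hj hi) _
    obtain ⟨x, hx, hx0, hxw⟩ := Nat.sInf_mem hne
    rw [mem_span_rows_iff] at hx
    obtain ⟨c, hc, rfl⟩ := hx
    rw [minDist, ← hxw]
    exact h c hc (by rintro rfl; simp at hx0)

theorem le_mul_spec_iff {p m : ℕ} {T : Matrix (Fin p) (Fin m) (ZMod 2)}
    (hT : ∀ c : Fin p → ZMod 2, c ≠ 0 → c ᵥ* T ≠ 0) {w t k : ℕ} (ht : 1 ≤ t) (hk : 1 ≤ k) :
    t ≤ w * spec T k ↔ ∃ R : Finset (Fin p), R.card = k ∧ IsGoodSet T w t R := by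
  have key : ∀ R : Finset (Fin p), R.card = k → (t ≤ w * minDist T R ↔ IsGoodSet T w t R) :=
    fun R hR => le_mul_minDist_iff hT (Finset.card_pos.1 (by omega)) w t
  constructor
  · intro h
    rcases ((Finset.univ : Finset (Fin p)).powersetCard k).eq_empty_or_nonempty with he | hne
    · rw [spec, he] at h
      simp at h
      omega
    · obtain ⟨R, hR, hs⟩ := Finset.exists_mem_eq_sup _ hne (minDist T)
      rw [Finset.mem_powersetCard] at hR
      rw [spec, hs] at h
      exact ⟨R, hR.2, (key R hR.2).1 h⟩
  · rintro ⟨R, hR, hg⟩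
    refine ((key R hR).2 hg).trans (Nat.mul_le_mul_left _ ?_)
    exact Finset.le_sup (f := minDist T) (Finset.mem_powersetCard.2 ⟨Finset.subset_univ _, hR⟩)

open Classical in
/-- The largest number of rows of `T` that generate a code of minimum distance at least `t / w`. -/
noncomputable def maxGood {p m : ℕ} (T : Matrix (Fin p) (Fin m) (ZMod 2)) (w t : ℕ) : ℕ :=
  (Finset.univ.filter (IsGoodSet T w t)).sup Finset.card

theorem IsGoodSet.card_le_maxGood {p m : ℕ} {T : Matrix (Fin p) (Fin m) (ZMod 2)} {w t : ℕ}
    {R : Finset (Fin p)} (h : IsGoodSet T w t R) : R.card ≤ maxGood T w t := by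
  classical
  exact Finset.le_sup (f := Finset.card) (by simpa using h)

theorem exists_isGoodSet_card_eq_maxGood {p m : ℕ} (T : Matrix (Fin p) (Fin m) (ZMod 2))
    (w t : ℕ) : ∃ R : Finset (Fin p), R.card = maxGood T w t ∧ IsGoodSet T w t R := by
  classical
  have hne : (Finset.univ.filter (IsGoodSet T w t)).Nonempty := by
    refine ⟨∅, ?_⟩
    simp only [Finset.mem_filter, Finset.mem_univ, true_and]
    exact fun c hc hc0 => (hc0 (funext fun i => hc i (by simp))).elim
  obtain ⟨R, hR, hs⟩ := Finset.exists_mem_eq_sup _ hne Finset.card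
  refine ⟨R, ?_, by simpa using hR⟩
  rw [← hs, maxGood]

/-- Subsets of good sets are good, so the cardinalities of good sets fill an initial segment. -/
theorem le_maxGood_iff {p m : ℕ} (T : Matrix (Fin p) (Fin m) (ZMod 2)) (w t k : ℕ) :
    k ≤ maxGood T w t ↔ ∃ R : Finset (Fin p), R.card = k ∧ IsGoodSet T w t R := by
  constructor
  · intro h
    obtain ⟨R, hR, hg⟩ := exists_isGoodSet_card_eq_maxGood T w t
    obtain ⟨R', hsub, hc⟩ := Finset.exists_subset_card_eq (h.trans hR.ge)
    exact ⟨R', hc, fun c hc => hg c fun i hi => hc i fun hi' => hi (hsub hi')⟩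
  · rintro ⟨R, rfl, hg⟩
    exact hg.card_le_maxGood

theorem card_le_mul_spec {p m : ℕ} {T : Matrix (Fin p) (Fin m) (ZMod 2)}
    (hT : ∀ c : Fin p → ZMod 2, c ≠ 0 → c ᵥ* T ≠ 0) {w t : ℕ} (ht : 1 ≤ t) :
    (Finset.univ.filter fun j : Fin p => t ≤ w * spec T ((j : ℕ) + 1)).card = maxGood T w t := by
  have h : ∀ j : Fin p, t ≤ w * spec T ((j : ℕ) + 1) ↔ (j : ℕ) < maxGood T w t := fun j => by
    rw [le_mul_spec_iff hT ht (by omega), ← le_maxGood_iff, Nat.succ_le_iff]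
  simp only [h]
  rw [Fin.card_filter_val_lt, min_eq_right]
  obtain ⟨R, hR, -⟩ := exists_isGoodSet_card_eq_maxGood T w t
  rw [← hR]
  simpa using R.card_le_univ

/-! ### Weights in Kronecker products -/

theorem kron_apply {a b c d : ℕ} (A : Matrix (Fin a) (Fin c) (ZMod 2))
    (B : Matrix (Fin b) (Fin d) (ZMod 2)) (q : Fin a) (j : Fin b) (s : Fin c) (x : Fin d) :
    kron A B (finProdFinEquiv (q, j)) (finProdFinEquiv (s, x)) = A q s * B j x := by
  have hb : 0 < b := j.pos
  have hd : 0 < d := x.pos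
  simp only [kron, Matrix.of_apply]
  congr 2 <;> ext <;> simp [Nat.add_mul_div_left, hb, hd, Nat.div_eq_of_lt, Nat.mod_eq_of_lt]

theorem popCount_bit (q b : ℕ) (hb : b < 2) : popCount (b + 2 * q) = popCount q + b := by
  unfold popCount
  rcases Nat.eq_zero_or_pos (b + 2 * q) with h | h
  · obtain rfl : b = 0 := by omega
    obtain rfl : q = 0 := by omega
    simp
  · rw [Nat.digits_def' (by norm_num) h]
    have h1 : (b + 2 * q) % 2 = b := by omega
    have h2 : (b + 2 * q) / 2 = q := by omega
    rw [h1, h2, List.count_cons]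
    interval_cases b <;> simp

theorem hammingNorm_comp_equiv {α β : Type*} [Fintype α] [Fintype β] (e : α ≃ β)
    (f : β → ZMod 2) : hammingNorm (fun a => f (e a)) = hammingNorm f := by
  unfold hammingNorm
  refine Finset.card_equiv e fun a => ?_
  simp

theorem hammingNorm_tensor {α β : Type*} [Fintype α] [Fintype β] (f : α → ZMod 2)
    (g : β → ZMod 2) :
    hammingNorm (fun s : α × β => f s.1 * g s.2) = hammingNorm f * hammingNorm g := by
  unfold hammingNorm
  rw [← Finset.card_product]
  congr 1
  ext s
  simp

theorem hammingNorm_fin_two_prod {κ : Type*} [Fintype κ] (f : Fin 2 × κ → ZMod 2) :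
    hammingNorm f = hammingNorm (fun x => f (0, x)) + hammingNorm (fun x => f (1, x)) := by
  simp only [hammingNorm, Finset.card_filter]
  rw [Fintype.sum_prod_type, Fin.sum_univ_two]

theorem hammingNorm_le_add {κ : Type*} [Fintype κ] (u v : κ → ZMod 2) :
    hammingNorm u ≤ hammingNorm (u + v) + hammingNorm v := by
  classical
  unfold hammingNorm
  refine (Finset.card_le_card ?_).trans (Finset.card_union_le _ _)
  intro i
  simp only [Finset.mem_filter, Finset.mem_univ, true_and, Finset.mem_union, Pi.add_apply]
  intro h
  by_contra! h'
  rw [h'.2, add_zero] at h'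
  exact h h'.1

theorem hammingNorm_kronPow_row (n : ℕ) (q : Fin (2 ^ n)) :
    hammingNorm (kronPow T2 n q) = 2 ^ popCount (q : ℕ) := by
  induction n with
  | zero =>
    obtain rfl : q = 0 := Subsingleton.elim (α := Fin 1) _ _
    have : (0 : Fin (2 ^ 0)).val = 0 := rfl
    rw [this]
    decide
  | succ n ih =>
    obtain ⟨⟨q', b⟩, rfl⟩ := (finProdFinEquiv (m := 2 ^ n) (n := 2)).surjective q
    have h := hammingNorm_comp_equiv (finProdFinEquiv (m := 2 ^ n) (n := 2))
      (kron (kronPow T2 n) T2 (finProdFinEquiv (q', b)))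
    have h' : (fun a => kron (kronPow T2 n) T2 (finProdFinEquiv (q', b)) (finProdFinEquiv a)) =
        fun s : Fin (2 ^ n) × Fin 2 => kronPow T2 n q' s.1 * T2 b s.2 :=
      funext fun s => kron_apply _ _ q' b s.1 s.2
    rw [h', hammingNorm_tensor, ih] at h
    refine h.symm.trans ?_
    rw [finProdFinEquiv_apply_val, popCount_bit _ _ b.isLt, pow_add]
    have hT2 : ∀ b : Fin 2, hammingNorm (T2 b) = 2 ^ (b : ℕ) := by decide
    rw [hT2]

/-- The `(u + v | v)` bound: a nonzero pair has weight at least `wt u` when `u ≠ 0`, and exactly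
`2 * wt v` when `u = 0`. -/
theorem plotkin_bound {κ : Type*} [Fintype κ] (U : Fin 2 → κ → ZMod 2) (hU : U ≠ 0) :
    ∃ b : Fin 2, U b ≠ 0 ∧ 2 ^ (b : ℕ) * hammingNorm (U b) ≤
      hammingNorm (fun s : Fin 2 × κ => ∑ b, T2 b s.1 * U b s.2) := by
  have hw : hammingNorm (fun s : Fin 2 × κ => ∑ b, T2 b s.1 * U b s.2) =
      hammingNorm (U 0 + U 1) + hammingNorm (U 1) := by
    rw [hammingNorm_fin_two_prod]
    congr 2 <;> ext x <;> simp [T2, Fin.sum_univ_two]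
  rw [hw]
  by_cases h0 : U 0 = 0
  · refine ⟨1, fun h1 => hU ?_, by simp [h0]; omega⟩
    ext b x
    fin_cases b
    · simp [h0]
    · simp [h1]
  · exact ⟨0, h0, by simpa using hammingNorm_le_add (U 0) (U 1)⟩

/-- The codeword with blocks `∑ q, (T₂^{⊗n}) q s • U q` is at least as heavy as the contribution
`2 ^ popcount q * wt (U q)` of one of its nonzero components. The components `U q` live over an
arbitrary index type because the inductive step doubles it. -/
theorem kronPow_bound (n : ℕ) {κ : Type} [Fintype κ] (U : Fin (2 ^ n) → κ → ZMod 2)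
    (hU : U ≠ 0) :
    ∃ q, U q ≠ 0 ∧ 2 ^ popCount (q : ℕ) * hammingNorm (U q) ≤
      hammingNorm (fun s : Fin (2 ^ n) × κ => ∑ q, kronPow T2 n q s.1 * U q s.2) := by
  induction n generalizing κ with
  | zero =>
    have hq : ∀ q : Fin (2 ^ 0), q = 0 := fun q => Subsingleton.elim (α := Fin 1) _ _
    refine ⟨0, fun h => hU (funext fun q => by rw [hq q, h]; rfl), ?_⟩
    have h1 : (fun s : Fin (2 ^ 0) × κ => ∑ q, kronPow T2 0 q s.1 * U q s.2) =
        fun s : Fin (2 ^ 0) × κ => U 0 s.2 := by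
      ext s
      rw [Fintype.sum_eq_single 0 fun q h => (h (hq q)).elim, hq s.1]
      simp [kronPow]
    rw [h1]
    have h2 := hammingNorm_tensor (fun _ : Fin (2 ^ 0) => (1 : ZMod 2)) (U 0)
    simp only [one_mul] at h2
    rw [h2]
    refine Nat.mul_le_mul_right _ ?_
    decide
  | succ n ih =>
    let e : Fin (2 ^ n) × Fin 2 ≃ Fin (2 ^ (n + 1)) := finProdFinEquiv (m := 2 ^ n) (n := 2)
    -- absorb the last factor `T₂` into the components, which become indexed by `Fin 2 × κ`
    let V : Fin (2 ^ n) → Fin 2 × κ → ZMod 2 :=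
      fun q s => ∑ b, T2 b s.1 * U (e (q, b)) s.2
    have hplot : ∀ q, (fun b => U (e (q, b))) ≠ 0 → ∃ b : Fin 2, U (e (q, b)) ≠ 0 ∧
        2 ^ (b : ℕ) * hammingNorm (U (e (q, b))) ≤ hammingNorm (V q) :=
      fun q h => plotkin_bound (fun b => U (e (q, b))) h
    have hV : V ≠ 0 := by
      intro hV
      refine hU (funext fun i => ?_)
      obtain ⟨⟨q, b⟩, rfl⟩ := e.surjective i
      by_contra hne
      obtain ⟨b', hb', hle⟩ := hplot q (fun h => hne (congrFun h b))
      rw [hV] at hle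
      simp at hle
      exact hb' hle
    obtain ⟨q, hq, hle⟩ := ih V hV
    have hUq : (fun b => U (e (q, b))) ≠ 0 := by
      intro h
      refine hq (funext fun s => ?_)
      have : ∀ b, U (e (q, b)) = 0 := fun b => congrFun h b
      simp [V, this]
    obtain ⟨b, hb, hle'⟩ := hplot q hUq
    refine ⟨e (q, b), hb, ?_⟩
    have hpc : popCount (e (q, b) : ℕ) = popCount (q : ℕ) + b := by
      rw [← popCount_bit _ _ b.isLt]
      exact congrArg popCount (finProdFinEquiv_apply_val (q, b))
    have hw : hammingNorm (fun s : Fin (2 ^ n) × (Fin 2 × κ) =>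
          ∑ q, kronPow T2 n q s.1 * V q s.2) =
        hammingNorm (fun s : Fin (2 ^ (n + 1)) × κ =>
          ∑ q, kronPow T2 (n + 1) q s.1 * U q s.2) := by
      refine Eq.trans ?_ (hammingNorm_comp_equiv
        ((Equiv.prodAssoc (Fin (2 ^ n)) (Fin 2) κ).symm.trans (e.prodCongr (Equiv.refl κ)))
        (fun s : Fin (2 ^ (n + 1)) × κ => ∑ q, kronPow T2 (n + 1) q s.1 * U q s.2))
      congr 1
      ext ⟨s, f, x⟩
      refine Eq.trans ?_ (e.sum_comp _)
      rw [Fintype.sum_prod_type]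
      refine Finset.sum_congr rfl fun q _ => ?_
      simp only [V, Finset.mul_sum]
      refine Finset.sum_congr rfl fun b _ => ?_
      rw [← mul_assoc]
      exact congrArg (· * U (e (q, b)) x) (kron_apply (kronPow T2 n) T2 q b s f).symm
    rw [← hw]
    refine le_trans ?_ hle
    refine le_trans (le_of_eq ?_) (Nat.mul_le_mul_left _ hle')
    rw [← mul_assoc, ← pow_add, ← hpc]

/-! ### Good sets of the product matrix -/

/-- The word encoded by `c` has blocks `∑ q, A q s • (c_q B)`, where `c_q` is the `q`-th slice. -/
theorem vecMul_kron_apply {a p : ℕ} (A : Matrix (Fin a) (Fin a) (ZMod 2))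
    (B : Matrix (Fin p) (Fin p) (ZMod 2)) (c : Fin (a * p) → ZMod 2) (s : Fin a × Fin p) :
    (c ᵥ* kron A B) (finProdFinEquiv s) =
      ∑ q, A q s.1 * ((fun j => c (finProdFinEquiv (q, j))) ᵥ* B) s.2 := by
  obtain ⟨s, x⟩ := s
  simp only [Matrix.vecMul, dotProduct]
  rw [← finProdFinEquiv.sum_comp, Fintype.sum_prod_type]
  refine Finset.sum_congr rfl fun q _ => ?_
  rw [Finset.mul_sum]
  refine Finset.sum_congr rfl fun j _ => ?_
  rw [kron_apply]
  ring

theorem kron_weight_bound {n p : ℕ} {T : Matrix (Fin p) (Fin p) (ZMod 2)}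
    (hT : ∀ c : Fin p → ZMod 2, c ≠ 0 → c ᵥ* T ≠ 0) (c : Fin (2 ^ n * p) → ZMod 2)
    (hc : c ≠ 0) :
    ∃ q : Fin (2 ^ n), (fun j => c (finProdFinEquiv (q, j))) ≠ 0 ∧
      2 ^ popCount (q : ℕ) * hammingNorm ((fun j => c (finProdFinEquiv (q, j))) ᵥ* T) ≤
        hammingNorm (c ᵥ* kron (kronPow T2 n) T) := by
  have hU : (fun q : Fin (2 ^ n) => (fun j => c (finProdFinEquiv (q, j))) ᵥ* T) ≠ 0 := by
    intro h
    refine hc (funext fun i => ?_)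
    obtain ⟨⟨q, j⟩, rfl⟩ := finProdFinEquiv.surjective i
    by_contra hne
    exact hT _ (fun h' => hne (congrFun h' j)) (congrFun h q)
  obtain ⟨q, hq, hle⟩ := kronPow_bound n _ hU
  refine ⟨q, fun h => hq (by simp only [h, Matrix.zero_vecMul]), hle.trans (le_of_eq ?_)⟩
  rw [← hammingNorm_comp_equiv finProdFinEquiv]
  congr 1
  ext s
  exact (vecMul_kron_apply _ _ c s).symm

theorem kron_vecMul_ne_zero {n p : ℕ} {T : Matrix (Fin p) (Fin p) (ZMod 2)}
    (hT : ∀ c : Fin p → ZMod 2, c ≠ 0 → c ᵥ* T ≠ 0) (c : Fin (2 ^ n * p) → ZMod 2)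
    (hc : c ≠ 0) : c ᵥ* kron (kronPow T2 n) T ≠ 0 := by
  obtain ⟨q, hq, hle⟩ := kron_weight_bound hT c hc
  have := hammingNorm_pos_iff.2 (hT _ hq)
  rw [← hammingNorm_pos_iff]
  exact lt_of_lt_of_le (by positivity) hle

/-- The rows of the right factor that `R` selects inside block `q`. -/
def rowSlice {a p : ℕ} (R : Finset (Fin (a * p))) (q : Fin a) : Finset (Fin p) :=
  Finset.univ.filter fun j => finProdFinEquiv (q, j) ∈ R

theorem card_eq_sum_rowSlice {a p : ℕ} (R : Finset (Fin (a * p))) :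
    R.card = ∑ q, (rowSlice R q).card := by
  have h : R.card = ∑ i, if i ∈ R then 1 else 0 := by simp
  rw [h, ← finProdFinEquiv.sum_comp, Fintype.sum_prod_type]
  exact Finset.sum_congr rfl fun q _ => by rw [rowSlice, Finset.card_filter]

/-- The minimum distance of the code selected by `R` is the least of
`2 ^ popcount q * d(T^(R_q))` over the nonempty slices `R_q`, phrased through thresholds. -/
theorem isGoodSet_kron_iff {n p : ℕ} {T : Matrix (Fin p) (Fin p) (ZMod 2)}
    (hT : ∀ c : Fin p → ZMod 2, c ≠ 0 → c ᵥ* T ≠ 0) (t : ℕ) (R : Finset (Fin (2 ^ n * p))) :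
    IsGoodSet (kron (kronPow T2 n) T) 1 t R ↔
      ∀ q : Fin (2 ^ n), IsGoodSet T (2 ^ popCount (q : ℕ)) t (rowSlice R q) := by
  constructor
  · intro h q c hc hc0
    -- extend `c` by zero outside block `q`; the word becomes a pure tensor
    let c' : Fin (2 ^ n * p) → ZMod 2 := fun i =>
      if (finProdFinEquiv.symm i).1 = q then c (finProdFinEquiv.symm i).2 else 0
    have hc' : ∀ q' j, c' (finProdFinEquiv (q', j)) = if q' = q then c j else 0 := by
      intro q' j
      simp only [c', Equiv.symm_apply_apply]
    have hw : hammingNorm (c' ᵥ* kron (kronPow T2 n) T) =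
        2 ^ popCount (q : ℕ) * hammingNorm (c ᵥ* T) := by
      rw [← hammingNorm_kronPow_row, ← hammingNorm_tensor,
        ← hammingNorm_comp_equiv finProdFinEquiv]
      congr 1
      ext s
      rw [vecMul_kron_apply, Fintype.sum_eq_single q]
      · simp [hc']
      · intro q' hq'
        have : (fun j => c' (finProdFinEquiv (q', j))) = 0 := by
          ext j
          simp [hc', hq']
        rw [this, Matrix.zero_vecMul]
        simp
    rw [← hw, ← one_mul (hammingNorm _)]
    refine h c' (fun i hi => ?_) fun h0 => hc0 (funext fun j => ?_)
    · obtain ⟨⟨q', j⟩, rfl⟩ := finProdFinEquiv.surjective i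
      rw [hc']
      split_ifs with hq
      · subst hq
        exact hc j (by simpa [rowSlice] using hi)
      · rfl
    · have := hc' q j
      rw [h0] at this
      simpa using this.symm
  · intro h c hc hc0
    obtain ⟨q, hq, hle⟩ := kron_weight_bound hT c hc0
    rw [one_mul]
    refine (h q _ (fun j hj => hc _ ?_) hq).trans hle
    simpa [rowSlice] using hj

theorem maxGood_kron {n p : ℕ} {T : Matrix (Fin p) (Fin p) (ZMod 2)}
    (hT : ∀ c : Fin p → ZMod 2, c ≠ 0 → c ᵥ* T ≠ 0) (t : ℕ) :
    maxGood (kron (kronPow T2 n) T) 1 t =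
      ∑ q : Fin (2 ^ n), maxGood T (2 ^ popCount (q : ℕ)) t := by
  apply le_antisymm
  · obtain ⟨R, hR, hg⟩ := exists_isGoodSet_card_eq_maxGood (kron (kronPow T2 n) T) 1 t
    rw [← hR, card_eq_sum_rowSlice]
    exact Finset.sum_le_sum fun q _ => ((isGoodSet_kron_iff hT t R).1 hg q).card_le_maxGood
  · choose S hS hg using fun q : Fin (2 ^ n) =>
      exists_isGoodSet_card_eq_maxGood T (2 ^ popCount (q : ℕ)) t
    let R : Finset (Fin (2 ^ n * p)) := Finset.univ.filter fun i =>
      (finProdFinEquiv.symm i).2 ∈ S (finProdFinEquiv.symm i).1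
    have hsl : ∀ q, rowSlice R q = S q := by
      intro q
      ext j
      simp [rowSlice, R, -finProdFinEquiv_symm_apply]
    have hcard : R.card = ∑ q : Fin (2 ^ n), maxGood T (2 ^ popCount (q : ℕ)) t := by
      rw [card_eq_sum_rowSlice]
      exact Finset.sum_congr rfl fun q _ => by rw [hsl, hS]
    rw [← hcard]
    refine IsGoodSet.card_le_maxGood ((isGoodSet_kron_iff hT t R).2 fun q => ?_)
    rw [hsl]
    exact hg q

/-- The minimum-distance spectrum of `T_N = T₂^{⊗n} ⊗ T_p` is the descending sort of
the Kronecker product of the row weights `2^{popcount q}` of `T₂^{⊗n}` with the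
spectrum of `T_p`. -/
theorem stmt0 (p n : ℕ) (Tp : Matrix (Fin p) (Fin p) (ZMod 2)) (hTp : IsUnit Tp) :
    ∀ k : ℕ, 1 ≤ k → k ≤ 2 ^ n * p →
      spec (kron (kronPow T2 n) Tp) k =
        kthLargest
          (((Finset.univ : Finset (Fin (2 ^ n) × Fin p)).val).map
            (fun qj => 2 ^ popCount (qj.1 : ℕ) * spec Tp ((qj.2 : ℕ) + 1))) k := by
  intro k hk _
  have hT : ∀ c : Fin p → ZMod 2, c ≠ 0 → c ᵥ* Tp ≠ 0 := by
    intro c hc h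
    refine hc (Matrix.vecMul_injective_iff_isUnit.2 hTp ?_)
    simpa using h
  -- compare the two numbers through the positive thresholds below them
  have key : ∀ t : ℕ, 1 ≤ t → (t ≤ spec (kron (kronPow T2 n) Tp) k ↔
      t ≤ kthLargest (((Finset.univ : Finset (Fin (2 ^ n) × Fin p)).val).map
        (fun qj => 2 ^ popCount (qj.1 : ℕ) * spec Tp ((qj.2 : ℕ) + 1))) k) := by
    intro t ht
    rw [le_kthLargest_iff _ ht hk, ← one_mul (spec _ k),
      le_mul_spec_iff (kron_vecMul_ne_zero hT) ht hk, ← le_maxGood_iff, maxGood_kron hT,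
      Multiset.countP_map]
    have hcount : (Finset.univ.filter fun qj : Fin (2 ^ n) × Fin p =>
        t ≤ 2 ^ popCount (qj.1 : ℕ) * spec Tp ((qj.2 : ℕ) + 1)).card =
        ∑ q : Fin (2 ^ n), maxGood Tp (2 ^ popCount (q : ℕ)) t := by
      rw [Finset.card_filter, Fintype.sum_prod_type]
      refine Finset.sum_congr rfl fun q _ => ?_
      rw [← card_le_mul_spec hT ht, Finset.card_filter]
    rw [← hcount]
    rfl
  refine le_antisymm ?_ ?_
  · rcases Nat.eq_zero_or_pos (spec (kron (kronPow T2 n) Tp) k) with h | h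
    · omega
    · exact (key _ h).1 le_rfl
  · by_contra! h
    exact absurd ((key _ (by omega)).2 le_rfl) (not_le.2 h)
end

section
/- Let T_p be an invertible p×p binary matrix, n ≥ 0, N = 2^n·p, and T_N = T_2^{⊗n} ⊗ T_p. For a nonempty set I ⊆ {0,…,N−1} of row indices, define for each sector q ∈ {0,…,2^n−1} the set I_q = { j ∈ {0,…,p−1} : q·p + j ∈ I }. Then the minimum distance of the code generated by the rows of T_N indexed by I satisfies d(T_N^{(I)}) = min{ 2^{popcount(q)} · d(T_p^{(I_q)}) : q with I_q ≠ ∅ }. -/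
/-!
Every codeword of `A ⊗ T_p` splits into blocks, the `r`-th block being `∑ q, A q r • v q` with
`v q` in the sector code spanned by the rows of `T_p` indexed by `I_q` (`exists_combine`,
`combine_single_mem`). Its weight is the sum `blockWt A v` of the weights of its blocks.

For `A = T₂^{⊗n}` this weight obeys the `(u + w | w)` recursion: writing `u`, `w` for the even- and
odd-indexed parts of `v`, the weight of `v` is the weight of `u + w` plus that of `w`
(`blockWt_succ`). Induction on `n` along this recursion gives both bounds:

* a family concentrated in one sector `q` has weight exactly `2 ^ popCount q` times the weight of
  its entry (`blockWt_single`), so the minimum distance is at most each term on the right;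
* every nonzero `v` has a sector `q` with `v q ≠ 0` and weight at least
  `2 ^ popCount q * hammingNorm (v q)` (`exists_le_blockWt`): if `u ≠ 0`, the triangle inequality
  bounds the weight of `v` below by that of `u`; if `u = 0`, the weight of `v` is twice that
  of `w`.

Invertibility of `T_p` only serves to make its rows nonzero, so that each nonempty sector code
contains a nonzero vector and its minimum distance is attained.
-/

open Matrix

theorem sector_lt {a b : ℕ} (q : Fin a) (j : Fin b) : (q : ℕ) * b + (j : ℕ) < a * b :=
  calc (q : ℕ) * b + (j : ℕ) < (q : ℕ) * b + b := Nat.add_lt_add_left j.isLt _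
  _ = ((q : ℕ) + 1) * b := by ring
  _ ≤ a * b := Nat.mul_le_mul_right b q.isLt

/-- The set of kernel-row indices of sector `q` that belong to `I`. -/
def sectorSet {p n : ℕ} (I : Finset (Fin (2 ^ n * p))) (q : Fin (2 ^ n)) : Finset (Fin p) :=
  Finset.univ.filter fun j =>
    (⟨(q : ℕ) * p + (j : ℕ), sector_lt q j⟩ : Fin (2 ^ n * p)) ∈ I

/-! ### Decomposition of codewords into blocks -/

/-- The vector of length `c * d` whose `r`-th block of length `d` is `∑ q, A q r • v q`. It depends
linearly on the family `v`. -/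
def combine {a c : ℕ} (A : Matrix (Fin a) (Fin c) (ZMod 2)) (d : ℕ) :
    (Fin a → Fin d → ZMod 2) →ₗ[ZMod 2] (Fin (c * d) → ZMod 2) where
  toFun v i := ∑ q, A q i.divNat * v q i.modNat
  map_add' v w := by
    funext i
    simp [mul_add, Finset.sum_add_distrib]
  map_smul' k v := by
    funext i
    simp only [Pi.smul_apply, smul_eq_mul, RingHom.id_apply, Finset.mul_sum]
    exact Finset.sum_congr rfl fun q _ => by ring

/-- The sum over `r` of the Hamming weights of the blocks `∑ q, A q r • v q`. -/
def blockWt {a c d : ℕ} (A : Matrix (Fin a) (Fin c) (ZMod 2)) (v : Fin a → Fin d → ZMod 2) : ℕ :=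
  ∑ r, hammingNorm (∑ q, A q r • v q)

lemma hammingNorm_eq_sum {ι : Type*} [Fintype ι] (x : ι → ZMod 2) :
    hammingNorm x = ∑ i, if x i ≠ 0 then 1 else 0 := by
  simp only [hammingNorm, Finset.card_filter]

lemma hammingNorm_combine {a c d : ℕ} (A : Matrix (Fin a) (Fin c) (ZMod 2))
    (v : Fin a → Fin d → ZMod 2) : hammingNorm (combine A d v) = blockWt A v := by
  rw [hammingNorm_eq_sum, ← finProdFinEquiv.sum_comp, Fintype.sum_prod_type, blockWt]
  refine Finset.sum_congr rfl fun r _ => ?_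
  rw [hammingNorm_eq_sum]
  refine Finset.sum_congr rfl fun j _ => ?_
  have h : combine A d v (finProdFinEquiv (r, j)) = (∑ q, A q r • v q) j := by
    have h1 := finProdFinEquiv.symm_apply_apply (r, j)
    rw [finProdFinEquiv_symm_apply, Prod.mk.injEq] at h1
    simp only [combine, LinearMap.coe_mk, AddHom.coe_mk, h1.1, h1.2]
    simp
  rw [h]

lemma combine_single {a b c d : ℕ} (A : Matrix (Fin a) (Fin c) (ZMod 2))
    (B : Matrix (Fin b) (Fin d) (ZMod 2)) (q : Fin a) (j : Fin b) :
    combine A d (Pi.single q (B j)) = kron A B ⟨(q : ℕ) * b + (j : ℕ), sector_lt q j⟩ := by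
  funext i
  have hb : 0 < b := j.pos
  have h1 : ((q : ℕ) * b + (j : ℕ)) / b = q := by
    rw [mul_comm, Nat.mul_add_div hb, Nat.div_eq_of_lt j.isLt, add_zero]
  have h2 : ((q : ℕ) * b + (j : ℕ)) % b = j := by
    rw [mul_comm, Nat.mul_add_mod, Nat.mod_eq_of_lt j.isLt]
  simp only [combine, LinearMap.coe_mk, AddHom.coe_mk, kron, Matrix.of_apply, h1, h2]
  rw [Finset.sum_eq_single q]
  · simp only [Pi.single_eq_same]
    rfl
  · intro k _ hk
    simp [hk]
  · simp

/-- The code generated by the rows of `Tp` in sector `q`. -/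
abbrev sectorCode {p n : ℕ} (Tp : Matrix (Fin p) (Fin p) (ZMod 2)) (I : Finset (Fin (2 ^ n * p)))
    (q : Fin (2 ^ n)) : Submodule (ZMod 2) (Fin p → ZMod 2) :=
  Submodule.span (ZMod 2) ((fun i => Tp i) '' (sectorSet I q : Set (Fin p)))

lemma combine_single_mem {p n : ℕ} (A : Matrix (Fin (2 ^ n)) (Fin (2 ^ n)) (ZMod 2))
    (Tp : Matrix (Fin p) (Fin p) (ZMod 2)) (I : Finset (Fin (2 ^ n * p))) (q : Fin (2 ^ n))
    {w : Fin p → ZMod 2} (hw : w ∈ sectorCode Tp I q) :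
    combine A p (Pi.single q w) ∈
      Submodule.span (ZMod 2) ((fun i => kron A Tp i) '' (I : Set (Fin (2 ^ n * p)))) := by
  have key : sectorCode Tp I q ≤ (Submodule.span (ZMod 2)
      ((fun i => kron A Tp i) '' (I : Set (Fin (2 ^ n * p))))).comap
      ((combine A p).comp (LinearMap.single (ZMod 2) (fun _ => Fin p → ZMod 2) q)) := by
    rw [Submodule.span_le]
    rintro _ ⟨j, hj, rfl⟩
    have hj' : (⟨(q : ℕ) * p + (j : ℕ), sector_lt q j⟩ : Fin (2 ^ n * p)) ∈ I := by
      simpa [sectorSet] using hj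
    have := combine_single A Tp q j
    simp only [SetLike.mem_coe, Submodule.mem_comap, LinearMap.comp_apply, LinearMap.coe_single]
    rw [this]
    exact Submodule.subset_span ⟨_, hj', rfl⟩
  exact key hw

lemma exists_sector {p n : ℕ} {I : Finset (Fin (2 ^ n * p))} {i : Fin (2 ^ n * p)} (hi : i ∈ I) :
    ∃ (q : Fin (2 ^ n)) (j : Fin p), j ∈ sectorSet I q ∧
      i = ⟨(q : ℕ) * p + (j : ℕ), sector_lt q j⟩ := by
  have h : i = ⟨(i.divNat : ℕ) * p + (i.modNat : ℕ), sector_lt i.divNat i.modNat⟩ := by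
    ext
    simp [Nat.div_add_mod']
  refine ⟨i.divNat, i.modNat, ?_, h⟩
  simp only [sectorSet, Finset.mem_filter, Finset.mem_univ, true_and]
  rwa [← h]

/-- Conversely to `combine_single_mem`, every codeword comes from a family of sector codewords. -/
lemma exists_combine {p n : ℕ} (A : Matrix (Fin (2 ^ n)) (Fin (2 ^ n)) (ZMod 2))
    (Tp : Matrix (Fin p) (Fin p) (ZMod 2)) (I : Finset (Fin (2 ^ n * p)))
    {x : Fin (2 ^ n * p) → ZMod 2}
    (hx : x ∈ Submodule.span (ZMod 2)
      ((fun i => kron A Tp i) '' (I : Set (Fin (2 ^ n * p))))) :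
    ∃ v, (∀ q, v q ∈ sectorCode Tp I q) ∧ combine A p v = x := by
  have key : Submodule.span (ZMod 2) ((fun i => kron A Tp i) '' (I : Set (Fin (2 ^ n * p)))) ≤
      (Submodule.pi Set.univ (sectorCode Tp I)).map (combine A p) := by
    rw [Submodule.span_le]
    rintro _ ⟨i, hi, rfl⟩
    obtain ⟨q, j, hj, rfl⟩ := exists_sector hi
    refine ⟨Pi.single q (Tp j), ?_, combine_single A Tp q j⟩
    intro k _
    by_cases hk : k = q
    · subst hk
      rw [Pi.single_eq_same]
      exact Submodule.subset_span ⟨j, hj, rfl⟩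
    · rw [Pi.single_eq_of_ne hk]
      exact Submodule.zero_mem _
  obtain ⟨v, hv, hvx⟩ := key hx
  exact ⟨v, fun q => hv q trivial, hvx⟩

/-! ### Block weights for Kronecker powers of `T₂` -/

/-- The `(u + w | w)` recursion: the right-hand side involves the sum of the even- and odd-indexed
parts of `v`, and the odd-indexed part. -/
lemma blockWt_succ {n d : ℕ} (v : Fin (2 ^ n * 2) → Fin d → ZMod 2) :
    blockWt (kron (kronPow T2 n) T2) v =
      blockWt (kronPow T2 n)
        (fun q => v (finProdFinEquiv (q, 0)) + v (finProdFinEquiv (q, 1))) +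
      blockWt (kronPow T2 n) (fun q => v (finProdFinEquiv (q, 1))) := by
  have hk : ∀ (q r : Fin (2 ^ n)) (b c : Fin 2),
      kron (kronPow T2 n) T2 (finProdFinEquiv (q, b)) (finProdFinEquiv (r, c)) =
        kronPow T2 n q r * T2 b c := by
    intro q r b c
    have h1 : ∀ (s : Fin (2 ^ n)) (e : Fin 2), ((e : ℕ) + 2 * s) / 2 = s := by
      intro s e; omega
    have h2 : ∀ (s : Fin (2 ^ n)) (e : Fin 2), ((e : ℕ) + 2 * s) % 2 = e := by
      intro s e; omega
    simp only [kron, Matrix.of_apply, finProdFinEquiv_apply_val, h1, h2]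
  unfold blockWt
  rw [← finProdFinEquiv.sum_comp, Fintype.sum_prod_type, ← Finset.sum_add_distrib]
  refine Finset.sum_congr rfl fun r _ => ?_
  rw [Fin.sum_univ_two]
  congr 2
  all_goals
    rw [← finProdFinEquiv.sum_comp, Fintype.sum_prod_type]
    refine Finset.sum_congr rfl fun q _ => ?_
    rw [Fin.sum_univ_two, hk, hk]
    simp [T2]

lemma popCount_two_mul (q : ℕ) : popCount (2 * q) = popCount q := by
  rcases Nat.eq_zero_or_pos q with rfl | hq
  · simp
  · simp [popCount, Nat.digits_def' (b := 2) (by norm_num) (Nat.mul_pos two_pos hq)]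

lemma popCount_two_mul_add_one (q : ℕ) : popCount (1 + 2 * q) = popCount q + 1 := by
  have h1 : (1 + 2 * q) % 2 = 1 := by omega
  have h2 : (1 + 2 * q) / 2 = q := by omega
  simp [popCount, h1, h2]

lemma blockWt_zero {a c d : ℕ} (A : Matrix (Fin a) (Fin c) (ZMod 2)) :
    blockWt A (0 : Fin a → Fin d → ZMod 2) = 0 := by
  simp [blockWt]

lemma blockWt_single {d : ℕ} (n : ℕ) (q : Fin (2 ^ n)) (w : Fin d → ZMod 2) :
    blockWt (kronPow T2 n) (Pi.single q w) = 2 ^ popCount (q : ℕ) * hammingNorm w := by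
  induction n with
  | zero =>
    have hq : q = 0 := Subsingleton.elim (α := Fin 1) _ _
    subst hq
    simp [blockWt, kronPow, popCount]
  | succ n ih =>
    change Fin (2 ^ n * 2) at q
    obtain ⟨⟨s, b⟩, rfl⟩ := finProdFinEquiv.surjective q
    refine (blockWt_succ (Pi.single (finProdFinEquiv (s, b)) w)).trans ?_
    have hs : ∀ c : Fin 2, (fun t : Fin (2 ^ n) =>
        (Pi.single (finProdFinEquiv (s, b)) w : Fin (2 ^ n * 2) → Fin d → ZMod 2)
          (finProdFinEquiv (t, c))) = if c = b then Pi.single s w else 0 := by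
      intro c
      funext t
      by_cases hc : c = b
      · subst hc
        by_cases ht : t = s
        · subst ht; simp
        · simp [ht]
      · simp [hc]
    have hadd : ∀ f g : Fin (2 ^ n) → Fin d → ZMod 2, (fun t => f t + g t) = f + g :=
      fun _ _ => rfl
    rw [hadd (fun t => _) (fun t => _), hs 0, hs 1, finProdFinEquiv_apply_val]
    fin_cases b
    · simp [blockWt_zero, ih, popCount_two_mul]
    · simp [ih, popCount_two_mul_add_one, pow_succ]
      ring

/-- The weight is subadditive and negation is trivial in characteristic two, so the weight of `u`
is at most the sum of those of `u + w` and `w`. -/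
lemma blockWt_le_add {a c d : ℕ} (A : Matrix (Fin a) (Fin c) (ZMod 2))
    (u w : Fin a → Fin d → ZMod 2) : blockWt A u ≤ blockWt A (u + w) + blockWt A w := by
  unfold blockWt
  rw [← Finset.sum_add_distrib]
  refine Finset.sum_le_sum fun r _ => ?_
  simp only [Pi.add_apply, smul_add, Finset.sum_add_distrib]
  generalize ∑ q, A q r • u q = x
  generalize ∑ q, A q r • w q = y
  rw [hammingNorm_eq_sum, hammingNorm_eq_sum, hammingNorm_eq_sum, ← Finset.sum_add_distrib]
  refine Finset.sum_le_sum fun i _ => ?_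
  rw [Pi.add_apply]
  generalize x i = s
  generalize y i = t
  by_cases hs : s = 0
  · simp [hs]
  · by_cases ht : t = 0 <;> simp [hs, ht]

/-- The weight of a nonzero family is at least the weight it would have with only one suitable
nonzero entry kept (compare `blockWt_single`). -/
lemma exists_le_blockWt {d : ℕ} (n : ℕ) (v : Fin (2 ^ n) → Fin d → ZMod 2) (hv : v ≠ 0) :
    ∃ q, v q ≠ 0 ∧ 2 ^ popCount (q : ℕ) * hammingNorm (v q) ≤ blockWt (kronPow T2 n) v := by
  induction n with
  | zero =>
    obtain ⟨q, hq⟩ := Function.ne_iff.mp hv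
    have hq0 : q = 0 := Subsingleton.elim (α := Fin 1) _ _
    subst hq0
    refine ⟨0, hq, ?_⟩
    simp [blockWt, kronPow, popCount]
  | succ n ih =>
    change Fin (2 ^ n * 2) → Fin d → ZMod 2 at v
    set u : Fin (2 ^ n) → Fin d → ZMod 2 := fun s => v (finProdFinEquiv (s, 0)) with hu
    set w : Fin (2 ^ n) → Fin d → ZMod 2 := fun s => v (finProdFinEquiv (s, 1)) with hw
    have hrec : blockWt (kronPow T2 (n + 1)) v =
        blockWt (kronPow T2 n) (u + w) + blockWt (kronPow T2 n) w := blockWt_succ v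
    rw [hrec]
    by_cases hu0 : u = 0
    · have hw0 : w ≠ 0 := by
        intro hw0
        apply hv
        funext q
        obtain ⟨⟨s, b⟩, rfl⟩ := finProdFinEquiv.surjective q
        fin_cases b
        · exact congrFun hu0 s
        · exact congrFun hw0 s
      obtain ⟨s, hs, hle⟩ := ih w hw0
      refine ⟨finProdFinEquiv (s, 1), hs, ?_⟩
      rw [hu0, zero_add, finProdFinEquiv_apply_val]
      have hpop : popCount (((1 : Fin 2) : ℕ) + 2 * (s : ℕ)) = popCount s + 1 :=
        popCount_two_mul_add_one s
      change 2 ^ popCount (((1 : Fin 2) : ℕ) + 2 * (s : ℕ)) * hammingNorm (w s) ≤ _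
      rw [hpop, pow_succ]
      linarith
    · obtain ⟨s, hs, hle⟩ := ih u hu0
      refine ⟨finProdFinEquiv (s, 0), hs, ?_⟩
      rw [finProdFinEquiv_apply_val]
      have hpop : popCount (((0 : Fin 2) : ℕ) + 2 * (s : ℕ)) = popCount s := by
        simp [popCount_two_mul]
      change 2 ^ popCount (((0 : Fin 2) : ℕ) + 2 * (s : ℕ)) * hammingNorm (u s) ≤ _
      rw [hpop]
      exact hle.trans (blockWt_le_add _ _ _)

/-! ### Minimum distances -/

/-- If the code is nonzero, the infimum defining its minimum distance is attained rather than being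
the value `0` that `sInf` gives to the empty set. -/
lemma exists_minDist {p m : ℕ} (T : Matrix (Fin p) (Fin m) (ZMod 2)) (R : Finset (Fin p))
    {y : Fin m → ZMod 2}
    (hy : y ∈ Submodule.span (ZMod 2) ((fun i => T i) '' (R : Set (Fin p)))) (hy0 : y ≠ 0) :
    ∃ x ∈ Submodule.span (ZMod 2) ((fun i => T i) '' (R : Set (Fin p))),
      x ≠ 0 ∧ hammingNorm x = minDist T R :=
  Nat.sInf_mem (s := {w : ℕ | ∃ x ∈ Submodule.span (ZMod 2)
    ((fun i => T i) '' (R : Set (Fin p))), x ≠ 0 ∧ hammingNorm x = w}) ⟨_, y, hy, hy0, rfl⟩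

lemma minDist_le {p m : ℕ} (T : Matrix (Fin p) (Fin m) (ZMod 2)) (R : Finset (Fin p))
    {x : Fin m → ZMod 2}
    (hx : x ∈ Submodule.span (ZMod 2) ((fun i => T i) '' (R : Set (Fin p)))) (hx0 : x ≠ 0) :
    minDist T R ≤ hammingNorm x :=
  Nat.sInf_le ⟨x, hx, hx0, rfl⟩

lemma row_ne_zero {p : ℕ} {T : Matrix (Fin p) (Fin p) (ZMod 2)} (hT : IsUnit T) (j : Fin p) :
    T j ≠ 0 := by
  intro h
  have hdet : IsUnit T.det := (Matrix.isUnit_iff_isUnit_det T).mp hT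
  rw [Matrix.det_eq_zero_of_row_eq_zero j (congrFun h)] at hdet
  exact not_isUnit_zero hdet

/-- The minimum distance of the sub-code of `T_N = T₂^{⊗n} ⊗ T_p` generated by the rows
indexed by `I` is the minimum, over sectors `q` meeting `I`, of
`2^{popcount q} · d(T_p^{(I_q)})`. -/
theorem stmt2 (p n : ℕ) (Tp : Matrix (Fin p) (Fin p) (ZMod 2)) (hTp : IsUnit Tp)
    (I : Finset (Fin (2 ^ n * p))) (hI : I.Nonempty) :
    minDist (kron (kronPow T2 n) Tp) I =
      sInf {d : ℕ | ∃ q : Fin (2 ^ n), (sectorSet I q).Nonempty ∧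
        d = 2 ^ popCount (q : ℕ) * minDist Tp (sectorSet I q)} := by
  -- Each nonempty sector contributes a codeword of weight equal to its term on the right.
  have hword : ∀ q : Fin (2 ^ n), (sectorSet I q).Nonempty →
      ∃ x ∈ Submodule.span (ZMod 2)
        ((fun i => kron (kronPow T2 n) Tp i) '' (I : Set (Fin (2 ^ n * p)))),
        x ≠ 0 ∧ hammingNorm x = 2 ^ popCount (q : ℕ) * minDist Tp (sectorSet I q) := by
    rintro q ⟨j, hj⟩
    obtain ⟨w, hw, hw0, hwd⟩ := exists_minDist Tp (sectorSet I q)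
      (Submodule.subset_span ⟨j, hj, rfl⟩) (row_ne_zero hTp j)
    have hnorm : hammingNorm (combine (kronPow T2 n) p (Pi.single q w)) =
        2 ^ popCount (q : ℕ) * hammingNorm w := by
      rw [hammingNorm_combine, blockWt_single]
    refine ⟨_, combine_single_mem (kronPow T2 n) Tp I q hw, ?_, by rw [hnorm, hwd]⟩
    rw [← hammingNorm_pos_iff, hnorm]
    exact Nat.mul_pos (by positivity) (hammingNorm_pos_iff.mpr hw0)
  obtain ⟨i, hi⟩ := hI
  obtain ⟨q₀, j₀, hj₀, -⟩ := exists_sector hi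
  apply le_antisymm
  · refine le_csInf ⟨_, q₀, ⟨j₀, hj₀⟩, rfl⟩ ?_
    rintro _ ⟨q, hq, rfl⟩
    obtain ⟨x, hx, hx0, hxd⟩ := hword q hq
    exact hxd ▸ minDist_le _ _ hx hx0
  · obtain ⟨y, hy, hy0, -⟩ := hword q₀ ⟨j₀, hj₀⟩
    obtain ⟨x, hx, hx0, hxd⟩ := exists_minDist _ _ hy hy0
    obtain ⟨v, hv, rfl⟩ := exists_combine _ Tp I hx
    have hv0 : v ≠ 0 := by
      rintro rfl
      exact hx0 (map_zero _)
    obtain ⟨q, hq0, hle⟩ := exists_le_blockWt n v hv0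
    have hq : (sectorSet I q).Nonempty := by
      by_contra hne
      rw [Finset.not_nonempty_iff_eq_empty] at hne
      have hmem := hv q
      rw [sectorCode, hne] at hmem
      simp at hmem
      exact hq0 hmem
    rw [← hxd, hammingNorm_combine]
    refine le_trans (b := 2 ^ popCount (q : ℕ) * minDist Tp (sectorSet I q))
      (Nat.sInf_le ⟨q, hq, rfl⟩) (le_trans ?_ hle)
    exact Nat.mul_le_mul_left _ (minDist_le Tp _ (hv q) hq0)
end

section
/- Let A be an invertible a×a binary matrix and B an invertible b×b binary matrix. Then the minimum-distance spectra of the two Kronecker products agree: S_{A⊗B}(k) = S_{B⊗A}(k) for every k ∈ {1,…,a·b}. In other words, the minimum-distance spectrum does not depend on the order of the kernels in the Kronecker product. -/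
/-! The bijection `q * b + j ↦ j * a + q` between the flattened index sets `Fin (a * b)` and
`Fin (b * a)` carries `kron A B` to `kron B A` when applied to rows and columns at once
(`kron_swap_apply`). Permuting the columns of a code preserves Hamming weights, hence minimum
distances, and permuting the rows of `T` merely permutes the `k`-element sets `R` over which the
spectrum is maximised; so `spec` is invariant under both (`spec_eq_of_reindex`). -/

open Matrix

/-- The bijection `q * b + j ↦ j * a + q` of flattened indices. -/
def kronSwap (a b : ℕ) : Fin (a * b) ≃ Fin (b * a) :=
  (finProdFinEquiv.symm.trans (Equiv.prodComm _ _)).trans finProdFinEquiv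

theorem kron_eq_divNat_modNat {a b c d : ℕ} (A : Matrix (Fin a) (Fin c) (ZMod 2))
    (B : Matrix (Fin b) (Fin d) (ZMod 2)) (i : Fin (a * b)) (j : Fin (c * d)) :
    kron A B i j = A i.divNat j.divNat * B i.modNat j.modNat := rfl

theorem divNat_kronSwap {a b : ℕ} (i : Fin (a * b)) : (kronSwap a b i).divNat = i.modNat :=
  congrArg Prod.fst (finProdFinEquiv.symm_apply_apply (i.modNat, i.divNat))

theorem modNat_kronSwap {a b : ℕ} (i : Fin (a * b)) : (kronSwap a b i).modNat = i.divNat :=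
  congrArg Prod.snd (finProdFinEquiv.symm_apply_apply (i.modNat, i.divNat))

theorem kron_swap_apply {a b c d : ℕ} (A : Matrix (Fin a) (Fin c) (ZMod 2))
    (B : Matrix (Fin b) (Fin d) (ZMod 2)) (i : Fin (a * b)) (j : Fin (c * d)) :
    kron B A (kronSwap a b i) (kronSwap c d j) = kron A B i j := by
  simp only [kron_eq_divNat_modNat, divNat_kronSwap, modNat_kronSwap, mul_comm]

theorem hammingNorm_comp_equiv_s5 {m n : ℕ} (τ : Fin m ≃ Fin n) (x : Fin n → ZMod 2) :
    hammingNorm (x ∘ τ) = hammingNorm x := by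
  unfold hammingNorm
  exact Finset.card_equiv τ (by simp)

theorem minDist_map {p q m n : ℕ} (T : Matrix (Fin p) (Fin m) (ZMod 2))
    (T' : Matrix (Fin q) (Fin n) (ZMod 2)) (σ : Fin p ≃ Fin q) (τ : Fin m ≃ Fin n)
    (h : ∀ i j, T' (σ i) (τ j) = T i j) (R : Finset (Fin p)) :
    minDist T' (R.map σ.toEmbedding) = minDist T R := by
  -- Relabelling the columns by `τ` maps the code of `T'` on `σ(R)` onto that of `T` on `R`.
  let e : (Fin n → ZMod 2) ≃ₗ[ZMod 2] (Fin m → ZMod 2) := LinearEquiv.funCongrLeft _ _ τ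
  have he : ∀ x, e x = x ∘ τ := fun x => rfl
  have hspan : Submodule.span (ZMod 2) ((fun i => T i) '' (R : Set (Fin p))) =
      (Submodule.span (ZMod 2) ((fun i => T' i) ''
        ((R.map σ.toEmbedding : Finset (Fin q)) : Set (Fin q)))).map e.toLinearMap := by
    rw [Submodule.map_span, Finset.coe_map, Set.image_image, Set.image_image]
    congr 1
    refine Set.image_congr fun i _ => ?_
    funext j
    exact (h i j).symm
  unfold minDist
  congr 1
  ext w
  simp only [Set.mem_setOf_eq, hspan, Submodule.mem_map]
  constructor
  · rintro ⟨x, hx, hx0, hw⟩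
    exact ⟨e x, ⟨x, hx, rfl⟩, by simpa using hx0, by rw [he, hammingNorm_comp_equiv_s5, hw]⟩
  · rintro ⟨_, ⟨x, hx, rfl⟩, hx0, hw⟩
    refine ⟨x, hx, by simpa using hx0, ?_⟩
    rw [← hw]
    exact (hammingNorm_comp_equiv_s5 τ x).symm

theorem spec_le_of_reindex {p q m n : ℕ} (T : Matrix (Fin p) (Fin m) (ZMod 2))
    (T' : Matrix (Fin q) (Fin n) (ZMod 2)) (σ : Fin p ≃ Fin q) (τ : Fin m ≃ Fin n)
    (h : ∀ i j, T' (σ i) (τ j) = T i j) (k : ℕ) : spec T k ≤ spec T' k := by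
  refine Finset.sup_le fun R hR => ?_
  rw [← minDist_map T T' σ τ h R]
  refine Finset.le_sup (f := minDist T') ?_
  simpa [Finset.mem_powersetCard] using hR

theorem spec_eq_of_reindex {p q m n : ℕ} (T : Matrix (Fin p) (Fin m) (ZMod 2))
    (T' : Matrix (Fin q) (Fin n) (ZMod 2)) (σ : Fin p ≃ Fin q) (τ : Fin m ≃ Fin n)
    (h : ∀ i j, T' (σ i) (τ j) = T i j) (k : ℕ) : spec T k = spec T' k :=
  le_antisymm (spec_le_of_reindex T T' σ τ h k)
    (spec_le_of_reindex T' T σ.symm τ.symm (fun i j => by simp [← h]) k)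

/-- The minimum-distance spectrum does not depend on the order of the kernels in the
Kronecker product. -/
theorem stmt5 (a b : ℕ) (A : Matrix (Fin a) (Fin a) (ZMod 2))
    (B : Matrix (Fin b) (Fin b) (ZMod 2)) (hA : IsUnit A) (hB : IsUnit B) :
    ∀ k, 1 ≤ k → k ≤ a * b → spec (kron A B) k = spec (kron B A) k := by
  intro k _ _
  exact spec_eq_of_reindex _ _ (kronSwap a b) (kronSwap a b) (kron_swap_apply A B) k
end

section
/- For n ≥ 1 and T = T_2^{⊗n}, the minimum-distance spectrum value S_T(k) equals, for every k ∈ {1,…,2^n}, the k-th largest element (with multiplicity) of the multiset { 2^{popcount(q)} : 0 ≤ q ≤ 2^n − 1 } of row weights of T_2^{⊗n}; i.e., the spectrum of the Arikan transform T_2^{⊗n} is the descending sort of the vector (2,1)^{⊗n}. -/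
/-!
The minimum distance of the code generated by any set `R` of rows of `T₂^{⊗n}` equals the least
row weight occurring in `R`; given this, maximising over all `R` of size `k` amounts to picking the
`k` heaviest rows, and the resulting minimum is the `k`-th largest row weight.

The code's minimum distance is at most each row weight since every row is a nonzero codeword
(`hammingNorm_row`). The other inequality (`two_pow_le_hammingNorm_vecMul`) is by induction on `n`.
Split a coefficient vector `u` into its even-indexed part `u₀` and odd-indexed part `u₁`; the
codeword then has even part `(u₀ + u₁)G` and odd part `u₁G`, with `G = T₂^{⊗(n-1)}`. Suppose that
`u ≠ 0` and that every index in the support of `u` has popcount at least `t`, so that indices in the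
support of `u₀` have popcount at least `t`, and those in the support of `u₁` at least `t - 1`. If
`u₁ = 0` or `u₀ + u₁ = 0`, then one half of the codeword is `u₀G` with `u₀ ≠ 0`, of weight at least
`2^t`. Otherwise both halves have weight at least `2^(t-1)`.
-/

open Matrix

/-! ### Popcount and order statistics -/

theorem popCount_two_mul_add (q j : ℕ) (hj : j < 2) :
    popCount (j + 2 * q) = popCount q + j := by
  unfold popCount
  rcases Nat.eq_zero_or_pos (j + 2 * q) with h | h
  · obtain ⟨rfl, rfl⟩ : j = 0 ∧ q = 0 := by omega
    simp
  · rw [Nat.digits_def' (by norm_num) h, show (j + 2 * q) % 2 = j by omega,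
      show (j + 2 * q) / 2 = q by omega]
    interval_cases j <;> simp

/-- At least `k` entries of a nonincreasing list are bounded below by its `k`-th entry, and fewer
than `k` entries exceed it. -/
theorem countP_getD_of_sorted (L : List ℕ) (hL : L.Pairwise (· ≥ ·)) (k : ℕ) (hk : 1 ≤ k)
    (hkL : k ≤ L.length) :
    k ≤ L.countP (fun x => L.getD (k - 1) 0 ≤ x) ∧
      L.countP (fun x => L.getD (k - 1) 0 < x) < k := by
  have hlt : k - 1 < L.length := by omega
  have hm : L.getD (k - 1) 0 = L[k - 1] := by simp [hlt]
  rw [hm]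
  have hmono : ∀ i j (hi : i < L.length) (hj : j < L.length), i ≤ j → L[j] ≤ L[i] := by
    intro i j hi hj hij
    rcases hij.eq_or_lt with rfl | h
    · exact le_rfl
    · exact List.pairwise_iff_getElem.1 hL i j hi hj h
  constructor
  · have h1 : (L.take k).countP (fun x => L[k - 1] ≤ x) = (L.take k).length := by
      rw [List.countP_eq_length]
      intro a ha
      obtain ⟨i, hi, rfl⟩ := List.mem_iff_getElem.1 ha
      rw [List.length_take] at hi
      simpa using hmono i (k - 1) (by omega) hlt (by omega)
    have h2 := (List.take_sublist k L).countP_le (p := fun x => L[k - 1] ≤ x)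
    rw [h1, List.length_take] at h2
    omega
  · have h1 : (L.drop (k - 1)).countP (fun x => L[k - 1] < x) = 0 := by
      rw [List.countP_eq_zero]
      intro a ha
      obtain ⟨i, hi, rfl⟩ := List.mem_iff_getElem.1 ha
      rw [List.length_drop] at hi
      simpa using hmono (k - 1) (k - 1 + i) hlt (by omega) (by omega)
    have h2 : (L.take (k - 1)).countP (fun x => L[k - 1] < x) ≤ _ := List.countP_le_length
    have h3 := List.countP_append (p := fun x => L[k - 1] < x)
      (l₁ := L.take (k - 1)) (l₂ := L.drop (k - 1))
    rw [List.take_append_drop] at h3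
    rw [List.length_take] at h2
    omega

theorem card_filter_kthLargest {p : ℕ} (f : Fin p → ℕ) (k : ℕ) (hk : 1 ≤ k) (hkp : k ≤ p) :
    let m := kthLargest ((Finset.univ : Finset (Fin p)).val.map f) k
    k ≤ (Finset.univ.filter fun q => m ≤ f q).card ∧
      (Finset.univ.filter fun q => m < f q).card < k := by
  intro m
  set M := (Finset.univ : Finset (Fin p)).val.map f with hM
  set L := (M.sort (· ≤ ·)).reverse with hLdef
  have hLM : (L : Multiset ℕ) = M := by
    rw [hLdef, Multiset.coe_reverse, Multiset.sort_eq]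
  have hs : L.Pairwise (· ≥ ·) := by
    rw [hLdef, List.pairwise_reverse]
    exact Multiset.pairwise_sort M (· ≤ ·)
  have hlen : L.length = p := by
    rw [← Multiset.coe_card, hLM, hM]; simp
  have hcount : ∀ P : ℕ → Prop, ∀ _ : DecidablePred P,
      L.countP (fun x => P x) = (Finset.univ.filter fun q => P (f q)).card := by
    intro P _
    rw [← Multiset.coe_countP, hLM, hM, Multiset.countP_map]
    rfl
  have key := countP_getD_of_sorted L hs k hk (by omega)
  have hm : L.getD (k - 1) 0 = m := rfl
  rw [hm] at key
  rw [← hcount (fun x => m ≤ x), ← hcount (fun x => m < x)]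
  exact key

/-! ### Even and odd parts of a vector -/

/-- The subvector of `x` at indices congruent to `j` modulo `2`. -/
def part {n : ℕ} (j : Fin 2) (x : Fin (2 ^ (n + 1)) → ZMod 2) : Fin (2 ^ n) → ZMod 2 :=
  fun c => x (finProdFinEquiv (c, j))

theorem hammingNorm_eq_part {n : ℕ} (x : Fin (2 ^ (n + 1)) → ZMod 2) :
    hammingNorm x = hammingNorm (part 0 x) + hammingNorm (part 1 x) := by
  have h : ∀ (m : ℕ) (y : Fin m → ZMod 2), hammingNorm y = ∑ c, if y c ≠ 0 then 1 else 0 := by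
    intro m y
    rw [hammingNorm, Finset.card_filter]
  rw [h, h, h]
  have h2 := (finProdFinEquiv (m := 2 ^ n) (n := 2)).sum_comp
    (fun c => if x c ≠ 0 then 1 else 0)
  refine h2.symm.trans ?_
  rw [Fintype.sum_prod_type, ← Finset.sum_add_distrib]
  refine Finset.sum_congr rfl fun c _ => ?_
  rw [Fin.sum_univ_two]
  rfl

theorem eq_zero_of_part {n : ℕ} (x : Fin (2 ^ (n + 1)) → ZMod 2)
    (h0 : part 0 x = 0) (h1 : part 1 x = 0) : x = 0 := by
  have := hammingNorm_eq_part x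
  rw [h0, h1, hammingNorm_zero] at this
  exact hammingNorm_eq_zero.1 this

theorem kronPow_succ_apply (n : ℕ) (q c : Fin (2 ^ n)) (i j : Fin 2) :
    kronPow T2 (n + 1) (finProdFinEquiv (q, i)) (finProdFinEquiv (c, j)) =
      kronPow T2 n q c * T2 i j := by
  have e : ∀ (r : Fin (2 ^ n)) (l : Fin 2),
      ((finProdFinEquiv (r, l) : Fin (2 ^ n * 2)) : ℕ) / 2 = r ∧
      ((finProdFinEquiv (r, l) : Fin (2 ^ n * 2)) : ℕ) % 2 = l := by
    intro r l
    have := finProdFinEquiv_apply_val (r, l)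
    have hl := l.isLt
    simp only at this
    omega
  show kronPow T2 n _ _ * T2 _ _ = _
  congr 2 <;> apply Fin.ext
  exacts [(e q i).1, (e c j).1, (e q i).2, (e c j).2]

/-! ### Weights of codewords -/

theorem hammingNorm_row (n : ℕ) (q : Fin (2 ^ n)) :
    hammingNorm (kronPow T2 n q) = 2 ^ popCount q := by
  induction n with
  | zero =>
    have hq : q = 0 := Subsingleton.elim (α := Fin 1) _ _
    subst hq
    simp [kronPow, popCount, hammingNorm, Finset.card_filter]
  | succ n ih =>
    obtain ⟨⟨r, i⟩, rfl⟩ := (finProdFinEquiv (m := 2 ^ n) (n := 2)).surjective q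
    have hp : popCount ((finProdFinEquiv (r, i) : Fin (2 ^ n * 2)) : ℕ) = popCount r + i := by
      rw [finProdFinEquiv_apply_val]
      exact popCount_two_mul_add r i i.isLt
    have hpart : ∀ j, part j (kronPow T2 (n + 1) (finProdFinEquiv (r, i))) =
        fun c => kronPow T2 n r c * T2 i j := by
      intro j
      funext c
      exact kronPow_succ_apply n r c i j
    refine (hammingNorm_eq_part _).trans ?_
    rw [hpart, hpart]
    refine Eq.trans ?_ (congrArg (2 ^ ·) hp).symm
    have ihr := ih r
    have hz : hammingNorm (fun _ : Fin (2 ^ n) => (0 : ZMod 2)) = 0 := hammingNorm_zero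
    clear hpart hp ih
    generalize kronPow T2 n r = y at ihr ⊢
    fin_cases i
    · simp [T2, hz, ihr]
    · simp [T2, ihr, pow_succ, mul_two]

theorem part_vecMul (n : ℕ) (u : Fin (2 ^ (n + 1)) → ZMod 2) (j : Fin 2) :
    part j (u ᵥ* kronPow T2 (n + 1)) =
      (T2 0 j • part 0 u + T2 1 j • part 1 u) ᵥ* kronPow T2 n := by
  funext c
  have h2 := (finProdFinEquiv (m := 2 ^ n) (n := 2)).sum_comp
    (fun i => u i * kronPow T2 (n + 1) i (finProdFinEquiv (c, j)))
  refine h2.symm.trans ?_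
  rw [Fintype.sum_prod_type]
  refine Finset.sum_congr rfl fun q _ => ?_
  rw [Fin.sum_univ_two, kronPow_succ_apply, kronPow_succ_apply]
  simp only [part, Pi.add_apply, Pi.smul_apply, smul_eq_mul]
  ring

/-- A nonzero combination of rows, each of weight at least `2^t`, has weight at least `2^t`. -/
theorem two_pow_le_hammingNorm_vecMul (n : ℕ) : ∀ (t : ℕ) (u : Fin (2 ^ n) → ZMod 2), u ≠ 0 →
    (∀ q, u q ≠ 0 → t ≤ popCount q) → 2 ^ t ≤ hammingNorm (u ᵥ* kronPow T2 n) := by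
  induction n with
  | zero =>
    intro t u hu ht
    obtain ⟨q, hq⟩ := Function.ne_iff.1 hu
    have h := ht q hq
    have hq0 : (q : ℕ) = 0 := by
      have := q.isLt
      simp only [pow_zero] at this
      omega
    have ht0 : t = 0 := by
      rw [hq0] at h
      simpa [popCount] using h
    subst ht0
    have h1 : u ᵥ* kronPow T2 0 = u := Matrix.vecMul_one u
    rw [h1]
    exact hammingNorm_pos_iff.2 hu
  | succ n ih =>
    intro t u hu ht
    have hpart : ∀ (j : Fin 2) q, part j u q ≠ 0 → t ≤ popCount q + j := by
      intro j q hq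
      have h := ht _ hq
      have hv := finProdFinEquiv_apply_val (m := 2 ^ n) (n := 2) (q, j)
      have h' : t ≤ popCount ((j : ℕ) + 2 * (q : ℕ)) := hv ▸ h
      rwa [popCount_two_mul_add _ _ j.isLt] at h'
    have e0 : part 0 (u ᵥ* kronPow T2 (n + 1)) = (part 0 u + part 1 u) ᵥ* kronPow T2 n := by
      rw [part_vecMul]; simp [T2]
    have e1 : part 1 (u ᵥ* kronPow T2 (n + 1)) = part 1 u ᵥ* kronPow T2 n := by
      rw [part_vecMul]; simp [T2]
    rw [hammingNorm_eq_part, e0, e1]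
    have hp0 : ∀ q, part 0 u q ≠ 0 → t ≤ popCount q := fun q hq => by simpa using hpart 0 q hq
    have hp1 : ∀ q, part 1 u q ≠ 0 → t - 1 ≤ popCount q := fun q hq => by
      simpa using hpart 1 q hq
    by_cases h1 : part 1 u = 0
    · have h0 : part 0 u ≠ 0 := fun h0 => hu (eq_zero_of_part u h0 h1)
      have := ih t _ h0 hp0
      rw [h1, add_zero]
      omega
    by_cases h01 : part 0 u + part 1 u = 0
    · have heq : part 1 u = part 0 u := by
        funext q
        have h := congrFun h01 q
        simp only [Pi.add_apply, Pi.zero_apply] at h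
        exact (CharTwo.add_eq_zero.1 h).symm
      have h0 : part 0 u ≠ 0 := heq ▸ h1
      have := ih t _ h0 hp0
      rw [heq]
      omega
    · have a := ih (t - 1) _ h1 hp1
      have b := ih (t - 1) _ h01 fun q hq => by
        by_cases hq0 : part 0 u q = 0
        · exact hp1 q fun h => hq (by simp [hq0, h])
        · have := hp0 q hq0
          omega
      have c : 2 ^ t ≤ 2 ^ (t - 1 + 1) := Nat.pow_le_pow_right (by norm_num) (by omega)
      rw [pow_succ] at c
      omega

/-! ### Minimum distance of a set of rows -/

theorem minDist_le_row (n : ℕ) (R : Finset (Fin (2 ^ n))) (q : Fin (2 ^ n)) (hq : q ∈ R) :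
    minDist (kronPow T2 n) R ≤ 2 ^ popCount q := by
  refine Nat.sInf_le ⟨kronPow T2 n q, Submodule.subset_span ⟨q, hq, rfl⟩, ?_, hammingNorm_row n q⟩
  rw [← hammingNorm_ne_zero_iff, hammingNorm_row]
  positivity

theorem le_minDist (n : ℕ) (R : Finset (Fin (2 ^ n))) (hR : R.Nonempty) (m : ℕ)
    (hm : ∀ q ∈ R, m ≤ 2 ^ popCount q) : m ≤ minDist (kronPow T2 n) R := by
  obtain ⟨q₀, hq₀⟩ := hR
  -- The set of weights is nonempty, so its infimum is attained rather than a default value.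
  have hne : {w : ℕ | ∃ x ∈ Submodule.span (ZMod 2)
      ((fun i => kronPow T2 n i) '' (R : Set (Fin (2 ^ n)))), x ≠ 0 ∧ hammingNorm x = w}.Nonempty := by
    refine ⟨_, kronPow T2 n q₀, Submodule.subset_span ⟨q₀, hq₀, rfl⟩, ?_, rfl⟩
    rw [← hammingNorm_ne_zero_iff, hammingNorm_row]
    positivity
  obtain ⟨x, hx, hx0, hw⟩ := Nat.sInf_mem hne
  refine le_of_le_of_eq ?_ hw
  obtain ⟨q₁, hq₁, hmin⟩ := R.exists_min_image (fun q => popCount (q : ℕ)) ⟨q₀, hq₀⟩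
  refine (hm q₁ hq₁).trans ?_
  rw [Submodule.mem_span_image_finset_iff_exists_fun] at hx
  obtain ⟨c, rfl⟩ := hx
  set u : Fin (2 ^ n) → ZMod 2 := fun q => if h : q ∈ R then c ⟨q, h⟩ else 0 with hu
  have hsum : ∑ i : R, c i • kronPow T2 n i = u ᵥ* kronPow T2 n := by
    rw [Matrix.vecMul_eq_sum, ← Finset.sum_subset (Finset.subset_univ R)
      (fun q _ hq => by simp [hu, hq]), ← Finset.sum_coe_sort R]
    simp [hu]
  rw [hsum] at hx0 ⊢
  refine two_pow_le_hammingNorm_vecMul n _ u (fun h => hx0 (by rw [h, Matrix.zero_vecMul])) ?_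
  intro q hq
  exact hmin q (by by_contra h; exact hq (by simp [hu, h]))

/-- The spectrum of the Arikan transform `T₂^{⊗n}` is the descending sort of the
multiset of row weights `{2^{popcount q} : 0 ≤ q < 2^n}`, i.e. of `(2,1)^{⊗n}`. -/
theorem stmt6 (n : ℕ) (hn : 1 ≤ n) :
    ∀ k, 1 ≤ k → k ≤ 2 ^ n →
      spec (kronPow T2 n) k =
        kthLargest (((Finset.univ : Finset (Fin (2 ^ n))).val).map
          (fun q => 2 ^ popCount (q : ℕ))) k := by
  intro k hk hkn
  -- In the statement `q` has type `ℕ`, and the multiset `Finset.univ.val` is coerced from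
  -- `Multiset (Fin (2 ^ n))` to `Multiset ℕ`; this rewrites it as a map over `Fin (2 ^ n)`.
  have hcoe : (((Finset.univ : Finset (Fin (2 ^ n))).val).map
      (fun q => 2 ^ popCount (q : ℕ)) : Multiset ℕ) =
      Multiset.map (fun q : Fin (2 ^ n) => 2 ^ popCount (q : ℕ)) Finset.univ.val := by
    simp only [Multiset.bind_def, Multiset.pure_def, Multiset.bind_singleton, Multiset.map_map,
      Function.comp_def]
  rw [hcoe]
  obtain ⟨hge, hlt⟩ := card_filter_kthLargest (fun q : Fin (2 ^ n) => 2 ^ popCount (q : ℕ)) k hk hkn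
  apply le_antisymm
  · refine Finset.sup_le fun R hR => ?_
    have hcard := (Finset.mem_powersetCard.1 hR).2
    -- Fewer than `k` rows are heavier than the `k`-th largest weight, so one row of `R` is not.
    obtain ⟨q, hqR, hq⟩ := Finset.exists_mem_notMem_of_card_lt_card (hlt.trans_eq hcard.symm)
    exact (minDist_le_row n R q hqR).trans (not_lt.1 fun h => hq (Finset.mem_filter.2 ⟨Finset.mem_univ q, h⟩))
  · obtain ⟨R, hRsub, hcard⟩ := Finset.exists_subset_card_eq hge
    refine le_trans ?_ (Finset.le_sup
      (Finset.mem_powersetCard.2 ⟨Finset.subset_univ R, hcard⟩))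
    exact le_minDist n R (Finset.card_pos.1 (by omega)) _
      fun q hq => (Finset.mem_filter.1 (hRsub hq)).2
end

section
/- Let T = T_3 = [[1,1,1],[1,0,1],[0,1,1]]. For all L_0, L_1, L_2 ∈ ℝ and û_0, û_1 ∈ {0,1}, the exact successive-cancellation LLRs of T_3 are given by the reduced forms: λ_0 = 2·artanh(tanh(L_0/2)·tanh(L_1/2)·tanh(L_2/2)); λ_1 = (−1)^{û_0}·L_0 + 2·artanh(tanh(L_1/2)·tanh(L_2/2)); and λ_2 = (−1)^{û_0}·L_1 + (−1)^{û_0 ⊕ û_1}·L_2, where ⊕ denotes addition modulo 2. -/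
/-!
For `T₃` the codeword is `x = (v₀ + v₁, v₀ + v₂, v₀ + v₁ + v₂)`, so `x₀ + x₁ + x₂ = v₀`,
`x₁ + x₂ = v₁` and `x₀ = v₀ + v₁`. Give a bit of LLR `ℓ` the weight `e^ℓ` at `0` and `1` at `1`.

* `λ₀` compares the weights of the even and odd parity words on all three bits; by
  `tanh (ℓ/2) = (e^ℓ - 1) / (e^ℓ + 1)` their ratio is `(1 + t) / (1 - t)` with `t` the product of
  the three `tanh`s (`two_artanh_tanh_mul_mul`).
* For `λ₁`, fixing `v₀` makes `x₀` flip with `v₁`, which contributes the factor `e^{±L₀}`, and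
  leaves a parity comparison on the last two bits (`two_artanh_tanh_mul`).
* For `λ₂` both sums have a single term, and flipping `v₂` flips exactly `x₁` and `x₂`.

The finite sums are evaluated explicitly through `sum_bits`, for each value of the decided bits.
-/

open Matrix

/-- The ternary kernel `T₃`. -/
def T3 : Matrix (Fin 3) (Fin 3) (ZMod 2) := !![1, 1, 1; 1, 0, 1; 0, 1, 1]

/-- Inverse hyperbolic tangent. -/
noncomputable def artanh (x : ℝ) : ℝ := Real.log ((1 + x) / (1 - x)) / 2

/-- Exact successive-cancellation LLR `λ_i` for the kernel `T`, channel LLRs `L`,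
and previously decided bits `uhat 0, …, uhat (i-1)`:
`λ_i = ln ( Σ_{x ∈ X₀⁽ⁱ⁾} exp(Σ_t (1 - x_t) L_t) / Σ_{x ∈ X₁⁽ⁱ⁾} exp(Σ_t (1 - x_t) L_t) )`,
where `X_a⁽ⁱ⁾` is the family of codewords `x = v · T` with `v t = uhat t` for `t < i`,
`v i = a`, and the remaining bits of `v` free. -/
noncomputable def scLLR {p : ℕ} (T : Matrix (Fin p) (Fin p) (ZMod 2)) (L : Fin p → ℝ)
    (uhat : Fin p → ZMod 2) (i : Fin p) : ℝ :=
  Real.log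
    ((∑ v ∈ Finset.univ.filter (fun v : Fin p → ZMod 2 =>
        (∀ t, t < i → v t = uhat t) ∧ v i = 0),
      Real.exp (∑ t, (1 - (((v ᵥ* T) t).val : ℝ)) * L t)) /
     (∑ v ∈ Finset.univ.filter (fun v : Fin p → ZMod 2 =>
        (∀ t, t < i → v t = uhat t) ∧ v i = 1),
      Real.exp (∑ t, (1 - (((v ᵥ* T) t).val : ℝ)) * L t)))

/-- A sum over `𝔽₂³` written out coordinate by coordinate. -/
lemma sum_bits (f : (Fin 3 → ZMod 2) → ℝ) :
    ∑ v, f v = ∑ a : ZMod 2, ∑ b : ZMod 2, ∑ c : ZMod 2, f ![a, b, c] := by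
  have e : ∑ v, f v = ∑ q : ZMod 2 × ZMod 2 × ZMod 2, f ![q.1, q.2.1, q.2.2] := by
    refine (Fintype.sum_bijective (fun q : ZMod 2 × ZMod 2 × ZMod 2 => ![q.1, q.2.1, q.2.2])
      ?_ _ _ (fun _ => rfl)).symm
    refine ⟨by decide, fun v => ⟨(v 0, v 1, v 2), ?_⟩⟩
    ext i
    fin_cases i <;> rfl
  rw [e, Fintype.sum_prod_type]
  simp only [Fintype.sum_prod_type]

lemma sum_zmod_two (f : ZMod 2 → ℝ) : ∑ a, f a = f 0 + f 1 := Fin.sum_univ_two f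

lemma tanh_half (x : ℝ) : Real.tanh (x / 2) = (Real.exp x - 1) / (Real.exp x + 1) := by
  have h : Real.exp x = Real.exp (x / 2) * Real.exp (x / 2) := by
    rw [← Real.exp_add, add_halves]
  have := Real.exp_pos (x / 2)
  rw [Real.tanh_eq, Real.exp_neg, h]
  field_simp

lemma two_artanh (x : ℝ) : 2 * artanh x = Real.log ((1 + x) / (1 - x)) := by
  unfold artanh; ring

/-- The parity (boxplus) rule for two bits: the ratio on the right compares the total weights of
the even and the odd parity words, a bit of LLR `ℓ` having weight `e^ℓ` at `0` and `1` at `1`. -/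
lemma two_artanh_tanh_mul (x y : ℝ) :
    2 * artanh (Real.tanh (x / 2) * Real.tanh (y / 2)) =
      Real.log ((Real.exp x * Real.exp y + 1) / (Real.exp x + Real.exp y)) := by
  rw [two_artanh, tanh_half, tanh_half]
  have hx := Real.exp_pos x
  have hy := Real.exp_pos y
  generalize Real.exp x = X at *
  generalize Real.exp y = Y at *
  have e1 : 1 + (X - 1) / (X + 1) * ((Y - 1) / (Y + 1)) =
      2 * (X * Y + 1) / ((X + 1) * (Y + 1)) := by field_simp; ring
  have e2 : 1 - (X - 1) / (X + 1) * ((Y - 1) / (Y + 1)) =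
      2 * (X + Y) / ((X + 1) * (Y + 1)) := by field_simp; ring
  rw [e1, e2]
  congr 1
  field_simp

/-- The three-bit analogue of `two_artanh_tanh_mul`. -/
lemma two_artanh_tanh_mul_mul (x y z : ℝ) :
    2 * artanh (Real.tanh (x / 2) * Real.tanh (y / 2) * Real.tanh (z / 2)) =
      Real.log ((Real.exp x * Real.exp y * Real.exp z + Real.exp x + Real.exp y + Real.exp z) /
        (Real.exp x * Real.exp y + Real.exp x * Real.exp z + Real.exp y * Real.exp z + 1)) := by
  rw [two_artanh, tanh_half, tanh_half, tanh_half]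
  have hx := Real.exp_pos x
  have hy := Real.exp_pos y
  have hz := Real.exp_pos z
  generalize Real.exp x = X at *
  generalize Real.exp y = Y at *
  generalize Real.exp z = Z at *
  have e1 : 1 + (X - 1) / (X + 1) * ((Y - 1) / (Y + 1)) * ((Z - 1) / (Z + 1)) =
      2 * (X * Y * Z + X + Y + Z) / ((X + 1) * (Y + 1) * (Z + 1)) := by field_simp; ring
  have e2 : 1 - (X - 1) / (X + 1) * ((Y - 1) / (Y + 1)) * ((Z - 1) / (Z + 1)) =
      2 * (X * Y + X * Z + Y * Z + 1) / ((X + 1) * (Y + 1) * (Z + 1)) := by field_simp; ring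
  rw [e1, e2]
  congr 1
  field_simp

lemma zmod_two_cases (a : ZMod 2) : a = 0 ∨ a = 1 := by
  revert a; decide

lemma log_eq_add_log {r q a : ℝ} (hq : 0 < q) (h : r = Real.exp a * q) :
    Real.log r = a + Real.log q := by
  rw [h, Real.log_mul (Real.exp_pos a).ne' hq.ne', Real.log_exp]

lemma log_eq_add {r a b : ℝ} (h : r = Real.exp a * Real.exp b) : Real.log r = a + b := by
  rw [h, ← Real.exp_add, Real.log_exp]

/-- Reduced forms of the exact SC LLRs for the kernel `T₃`. -/
theorem stmt12 (L : Fin 3 → ℝ) (uhat : Fin 3 → ZMod 2) :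
    scLLR T3 L uhat 0 =
      2 * artanh (Real.tanh (L 0 / 2) * Real.tanh (L 1 / 2) * Real.tanh (L 2 / 2)) ∧
    scLLR T3 L uhat 1 =
      (-1 : ℝ) ^ (uhat 0).val * L 0 +
        2 * artanh (Real.tanh (L 1 / 2) * Real.tanh (L 2 / 2)) ∧
    scLLR T3 L uhat 2 =
      (-1 : ℝ) ^ (uhat 0).val * L 1 + (-1 : ℝ) ^ (uhat 0 + uhat 1).val * L 2 := by
  have add11 : (1 : ZMod 2) + 1 = 0 := by decide
  -- `simp` turns casts of `ZMod.val` into `ZMod.cast`, hence both evaluations at `1`.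
  have val1 : (1 : ZMod 2).val = 1 := by decide
  have cast1 : (ZMod.cast (1 : ZMod 2) : ℝ) = 1 := by
    rw [← ZMod.natCast_val, val1, Nat.cast_one]
  refine ⟨?_, ?_, ?_⟩
  · rw [two_artanh_tanh_mul_mul]
    simp [scLLR, Finset.sum_filter, sum_bits, sum_zmod_two, T3, Fin.sum_univ_three,
      Matrix.vecMul, dotProduct, add11, cast1, Real.exp_add]
    congr 2 <;> ring
  · rw [two_artanh_tanh_mul]
    rcases zmod_two_cases (uhat 0) with h0 | h0 <;>
    simp [scLLR, Finset.sum_filter, sum_bits, sum_zmod_two, T3, Fin.sum_univ_three,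
      Matrix.vecMul, dotProduct, add11, val1, cast1, Real.exp_add, h0]
    all_goals
      refine log_eq_add_log (by positivity) ?_
      try rw [Real.exp_neg]
      field_simp
    all_goals ring
  · rcases zmod_two_cases (uhat 0) with h0 | h0 <;>
    rcases zmod_two_cases (uhat 1) with h1 | h1 <;>
    simp [scLLR, Finset.sum_filter, sum_bits, sum_zmod_two, T3, Fin.forall_fin_succ,
      Fin.sum_univ_three, Matrix.vecMul, dotProduct, add11, val1, cast1, Real.exp_add, h0, h1]
    all_goals
      refine log_eq_add ?_
      try simp only [Real.exp_neg]
      field_simp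
end

section
/- Let T = T_5 = [[1,1,1,1,1],[1,0,0,0,0],[1,0,0,1,0],[1,1,1,0,0],[0,0,1,1,1]]. For all L_0,…,L_4 ∈ ℝ and û_0, û_1, û_2, û_3 ∈ {0,1}, the exact successive-cancellation LLR of the last input bit is λ_4 = (−1)^{û_0 ⊕ û_3}·L_2 + (−1)^{û_0 ⊕ û_2}·L_3 + (−1)^{û_0}·L_4, where ⊕ denotes addition modulo 2. -/
/-!
The last input bit has no free bits after it, so both sums in `scLLR T5 L uhat 4` have a single
term (`filter_last_eq`) and the logarithm of their quotient is a difference of two exponents.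
The two codewords differ by the last row `(0, 0, 1, 1, 1)` of `T₅` (`vecMul_T5`), so only positions
2, 3, 4 contribute, each with the sign given by the code bit under `v 4 = 0`
(`val_add_one_sub_val`).
-/

open Matrix

/-- The kernel `T₅`. -/
def T5 : Matrix (Fin 5) (Fin 5) (ZMod 2) :=
  !![1, 1, 1, 1, 1;
     1, 0, 0, 0, 0;
     1, 0, 0, 1, 0;
     1, 1, 1, 0, 0;
     0, 0, 1, 1, 1]

/-- The last input bit has no free bits after it, so each family `X_a⁽⁴⁾` is a singleton. -/
theorem filter_last_eq (uhat : Fin 5 → ZMod 2) (a : ZMod 2) :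
    Finset.univ.filter (fun v : Fin 5 → ZMod 2 => (∀ t, t < 4 → v t = uhat t) ∧ v 4 = a) =
      {![uhat 0, uhat 1, uhat 2, uhat 3, a]} := by
  ext v
  simp only [Finset.mem_filter, Finset.mem_univ, true_and, Finset.mem_singleton]
  constructor
  · rintro ⟨h, h4⟩
    funext t
    fin_cases t
    · exact h 0 (by decide)
    · exact h 1 (by decide)
    · exact h 2 (by decide)
    · exact h 3 (by decide)
    · exact h4
  · rintro rfl
    refine ⟨fun t ht => ?_, rfl⟩
    fin_cases t
    · rfl
    · rfl
    · rfl
    · rfl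
    · exact absurd ht (by decide)

/-- The five code bits of `(a, b, c, d, e) · T₅`. -/
theorem vecMul_T5 (a b c d e : ZMod 2) :
    ![a, b, c, d, e] ᵥ* T5 = ![a + b + c + d, a + d, a + d + e, a + c + e, a + e] := by
  revert a b c d e
  decide

/-- Flipping a code bit from `b` to `b + 1` changes its contribution to the exponent by
`(-1) ^ b` times its channel LLR. -/
theorem val_add_one_sub_val (b : ZMod 2) :
    ((b + 1).val : ℝ) - (b.val : ℝ) = (-1 : ℝ) ^ b.val := by
  have h : ∀ b : ZMod 2, ((b + 1).val : ℤ) - (b.val : ℤ) = (-1 : ℤ) ^ b.val := by decide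
  exact_mod_cast h b

/-- Reduced form of the exact SC LLR `λ₄` for the kernel `T₅`. -/
theorem stmt14 (L : Fin 5 → ℝ) (uhat : Fin 5 → ZMod 2) :
    scLLR T5 L uhat 4 =
      (-1 : ℝ) ^ (uhat 0 + uhat 3).val * L 2 +
      (-1 : ℝ) ^ (uhat 0 + uhat 2).val * L 3 +
      (-1 : ℝ) ^ (uhat 0).val * L 4 := by
  unfold scLLR
  rw [filter_last_eq, filter_last_eq, Finset.sum_singleton, Finset.sum_singleton,
    ← Real.exp_sub, Real.log_exp, vecMul_T5, vecMul_T5, ← val_add_one_sub_val,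
    ← val_add_one_sub_val, ← val_add_one_sub_val]
  simp only [Fin.sum_univ_five, add_zero, Matrix.cons_val]
  ring
end

section
/- Let T_12 = T_2 ⊗ T_2 ⊗ T_3, a 12×12 binary matrix, with T_2 = [[1,0],[1,1]] and T_3 = [[1,1,1],[1,0,1],[0,1,1]]. Then the rows of T_12 indexed by {3, 6, 10, 11} (0-indexed) span a linear code of minimum distance 6, and this is optimal among all 4-row subcodes, i.e. S_{T_12}(4) = 6; in contrast, the rows indexed by {8, 9, 10, 11} span a code of minimum distance 4. -/
/-!
The two designs are generated by four rows each, so the lower bounds on their minimum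
distances follow by checking the sixteen combinations of these rows (`le_minDist_four`).
The upper bound for the reliability design is witnessed by row `8`, of weight `4`.

The upper bound `6` holds for any four rows (`minDist_T12_le_six`): the rows of `T₂ ⊗ T₂`
have weights `1, 2, 2, 4`, those of `T₃` have weights `3, 2, 2`, and the weight of a
Kronecker product of two rows is the product of their weights. Hence only the rows
`9`, `10`, `11` of `T₁₂` are heavier than `6`, and any four rows include one of weight
at most `6`.
-/

open Matrix

/-- `T₁₂ = T₂ ⊗ T₂ ⊗ T₃`. -/
def T12 : Matrix (Fin 12) (Fin 12) (ZMod 2) := kron (kron T2 T2) T3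

/-- A nonzero generating row bounds the minimum distance from above by its weight. -/
theorem minDist_le_row_s16 {p m : ℕ} (T : Matrix (Fin p) (Fin m) (ZMod 2))
    (R : Finset (Fin p)) (i : Fin p) (hi : i ∈ R) (h0 : T i ≠ 0) :
    minDist T R ≤ hammingNorm (T i) :=
  Nat.sInf_le ⟨T i, Submodule.subset_span ⟨i, hi, rfl⟩, h0, rfl⟩

/-- The lower bound on the minimum distance of a code generated by four rows follows from
checking all combinations of these rows. The row `i` is required to be nonzero because
the minimum distance of the zero code is `0` by convention. -/
theorem le_minDist_four {p m : ℕ} (T : Matrix (Fin p) (Fin m) (ZMod 2))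
    (i j k l : Fin p) (n : ℕ) (h0 : T i ≠ 0)
    (h : ∀ a b c d : ZMod 2, a • T i + (b • T j + (c • T k + d • T l)) ≠ 0 →
      n ≤ hammingNorm (a • T i + (b • T j + (c • T k + d • T l)))) :
    n ≤ minDist T {i, j, k, l} := by
  refine le_csInf ⟨_, T i, Submodule.subset_span ⟨i, by simp, rfl⟩, h0, rfl⟩ ?_
  rintro w ⟨x, hx, hx0, rfl⟩
  simp only [Finset.coe_insert, Finset.coe_singleton, Set.image_insert_eq,
    Set.image_singleton, Submodule.mem_span_insert, Submodule.mem_span_singleton] at hx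
  obtain ⟨a, _, ⟨b, _, ⟨c, _, ⟨d, rfl⟩, rfl⟩, rfl⟩, rfl⟩ := hx
  exact h a b c d hx0

theorem T12_row_ne_zero : ∀ i, T12 i ≠ 0 := by
  have h : ∀ i : Fin 12, hammingNorm (T12 i) ≠ 0 := by decide +kernel
  exact fun i => hammingNorm_ne_zero_iff.mp (h i)

theorem T12_row_weight_le : ∀ i : Fin 12, i < 9 → hammingNorm (T12 i) ≤ 6 := by
  decide +kernel

theorem minDist_T12_le_six (R : Finset (Fin 12)) (hR : R.card = 4) :
    minDist T12 R ≤ 6 := by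
  obtain ⟨i, hi, hlt⟩ : ∃ i ∈ R, i < 9 := by
    by_contra! hcon
    have hsub : R ⊆ {9, 10, 11} := fun i hi => by
      have hall : ∀ i : Fin 12, 9 ≤ i → i ∈ ({9, 10, 11} : Finset (Fin 12)) := by decide
      exact hall i (hcon i hi)
    have := Finset.card_le_card hsub
    rw [hR] at this
    exact absurd this (by decide)
  exact (minDist_le_row_s16 T12 R i hi (T12_row_ne_zero i)).trans (T12_row_weight_le i hlt)

theorem minDist_T12_distance_design : minDist T12 {3, 6, 10, 11} = 6 :=
  le_antisymm (minDist_T12_le_six _ (by decide))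
    (le_minDist_four T12 3 6 10 11 6 (T12_row_ne_zero 3) (by decide +kernel))

theorem minDist_T12_reliability_design : minDist T12 {8, 9, 10, 11} = 4 := by
  refine le_antisymm ?_
    (le_minDist_four T12 8 9 10 11 4 (T12_row_ne_zero 8) (by decide +kernel))
  have hw : hammingNorm (T12 8) = 4 := by decide +kernel
  exact (minDist_le_row_s16 T12 _ 8 (by decide) (T12_row_ne_zero 8)).trans hw.le

/-- For the `(12,4)` multi-kernel polar code: the distance-design row set `{3,6,10,11}`
achieves minimum distance `6`, which is optimal (`S_{T₁₂}(4) = 6`), while the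
reliability-design row set `{8,9,10,11}` achieves minimum distance `4`. -/
theorem stmt16 :
    minDist T12 ({3, 6, 10, 11} : Finset (Fin 12)) = 6 ∧
    spec T12 4 = 6 ∧
    minDist T12 ({8, 9, 10, 11} : Finset (Fin 12)) = 4 := by
  refine ⟨minDist_T12_distance_design, le_antisymm ?_ ?_, minDist_T12_reliability_design⟩
  · exact Finset.sup_le fun R hR => minDist_T12_le_six R (Finset.mem_powersetCard.mp hR).2
  · rw [← minDist_T12_distance_design]
    exact Finset.le_sup (f := minDist T12) (by decide +kernel)
end
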